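/- arXiv:2506.14091 — 5 statements merged into one kernel-verified Lean document; each statement's English description precedes it below -/
import Mathlib

section
/- Let A, B : [0,T] → ℝ be continuous and suppose x(t, y) denotes, for each initial value y in a neighborhood of x₀ ≠ 0, the solution of x' = A(t)x³ + B(t)x² defined on [0,T] with x(0, y) = y, and that the Poincaré map P(y) = x(T, y) is twice differentiable at x₀. If x(·, x₀) is a non-zero closed solution (x(T, x₀) = x₀ ≠ 0) and P'(x₀) = 1, then P''(x₀) = −(2/x₀²) ∫₀ᵀ exp(h(t)) · (∂x/∂t)(t, x₀) dt, where h(t) = ∫₀ᵗ A(s)x(s, x₀)² ds. -/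
/-!
For two non-vanishing solutions `u`, `v` of the Abel equation the difference of reciprocals
`1/u - 1/v` solves the linear equation `w' = A u v w`, hence
`v(t) - u(t) = u(t) v(t) (v(0) - u(0)) / (u(0) v(0)) * exp (∫₀ᵗ A u v)`
(`AbelSol.sub_eq`). This identity replaces the general theory of smooth dependence on initial
values. It shows that the solutions are ordered as their initial values, so the family is
uniformly bounded (`abel_family_bound`); then that `x(t, ·)` is continuous; and finally, on letting
`z → y` in the difference quotient, that
`∂x/∂y (t, y) = (x(t, y) / y)² exp (∫₀ᵗ A x(·, y)²)` (`abel_family_hasDerivAt`).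

Therefore `P'(y) = (P(y) / y)² exp F(y)` with `F(y) = ∫₀ᵀ A x(·, y)²`. At `x₀`, where `P = x₀` and
`P' = 1`, the factor `(P(y) / y)²` has derivative `0` and `exp F(x₀) = 1`, so that
`P''(x₀) = F'(x₀) = (2 / x₀²) ∫₀ᵀ A φ³ exp h` with `φ = x(·, x₀)`. Since `h' = A φ²`, integrating
`(φ exp h)' = A φ³ exp h + φ' exp h` over `[0, T]` gives the formula: the boundary terms cancel
because `φ(T) = φ(0)` and `h(T) = h(0) = 0`.
-/

open Set intervalIntegral

noncomputable section

/-- `x` is a solution of the Abel equation `x' = A(t) x^3 + B(t) x^2` on `[0,T]`. -/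
def AbelSol (A B : ℝ → ℝ) (T : ℝ) (x : ℝ → ℝ) : Prop :=
  ∀ t ∈ Set.Icc (0:ℝ) T,
    HasDerivWithinAt x (A t * x t ^ 3 + B t * x t ^ 2) (Set.Icc (0:ℝ) T) t

/-- A closed solution of the Abel equation on `[0,T]`. -/
def ClosedSol (A B : ℝ → ℝ) (T : ℝ) (x : ℝ → ℝ) : Prop :=
  AbelSol A B T x ∧ x 0 = x T

/-- A limit cycle: an isolated closed solution (isolated among initial values of
closed solutions). -/
def LimitCycle (A B : ℝ → ℝ) (T : ℝ) (x : ℝ → ℝ) : Prop :=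
  ClosedSol A B T x ∧
    ∃ ε > (0:ℝ), ∀ y : ℝ → ℝ, ClosedSol A B T y → |y 0 - x 0| < ε → y 0 = x 0

/-- The set of initial values of limit cycles of the Abel equation. -/
def LCInits (A B : ℝ → ℝ) (T : ℝ) : Set ℝ :=
  {v | ∃ x : ℝ → ℝ, LimitCycle A B T x ∧ x 0 = v}

/-- `g` has a zero of multiplicity at least `m` at `t` (derivatives taken within `E`). -/
def ZeroOrderGe (E : Set ℝ) (g : ℝ → ℝ) (t : ℝ) (m : ℕ) : Prop :=
  ∀ k < m, iteratedDerivWithin k g E t = 0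

/-- `g` has at most `n` zeros on `E`, counted with multiplicities. -/
def AtMostZerosOn (E : Set ℝ) (g : ℝ → ℝ) (n : ℕ) : Prop :=
  ∀ (S : Finset ℝ) (m : ℝ → ℕ),
    (∀ t ∈ S, t ∈ E ∧ 1 ≤ m t ∧ ZeroOrderGe E g t (m t)) →
      (∑ t ∈ S, m t) ≤ n

/-- `{f₀, f₁, f₂}` is an ET-system on `E`: linearly independent on `E`, and every
nontrivial linear combination has at most two zeros on `E` counted with multiplicities. -/
def IsETSystem3 (E : Set ℝ) (f₀ f₁ f₂ : ℝ → ℝ) : Prop :=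
  (∀ a b c : ℝ, (∀ t ∈ E, a * f₀ t + b * f₁ t + c * f₂ t = 0) → a = 0 ∧ b = 0 ∧ c = 0) ∧
  ∀ a b c : ℝ, ¬(a = 0 ∧ b = 0 ∧ c = 0) →
    AtMostZerosOn E (fun t => a * f₀ t + b * f₁ t + c * f₂ t) 2

/-- `{A, B}` is an ET-system with accuracy one on `E`: linearly independent on `E`, and
every nontrivial linear combination has at most two zeros on `E` counted with
multiplicities. -/
def IsETAcc1 (E : Set ℝ) (A B : ℝ → ℝ) : Prop :=
  (∀ l m : ℝ, (∀ t ∈ E, l * A t + m * B t = 0) → l = 0 ∧ m = 0) ∧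
  ∀ l m : ℝ, ¬(l = 0 ∧ m = 0) → AtMostZerosOn E (fun t => l * A t + m * B t) 2

/-- `P` is a Poincaré (time-`T`) map of the Abel equation on the set `U` of initial
values. -/
def IsPoincareOn (A B : ℝ → ℝ) (T : ℝ) (P : ℝ → ℝ) (U : Set ℝ) : Prop :=
  ∀ y ∈ U, ∃ z : ℝ → ℝ, AbelSol A B T z ∧ z 0 = y ∧ z T = P y

open Filter Topology

/-! ### Linear equations and the difference of two solutions -/

lemma hasDerivWithinAt_primitive {T : ℝ} (hT : 0 < T) {c : ℝ → ℝ}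
    (hc : ContinuousOn c (Icc 0 T)) {t : ℝ} (ht : t ∈ Icc 0 T) :
    HasDerivWithinAt (fun t => ∫ s in (0:ℝ)..t, c s) (c t) (Icc 0 T) t := by
  -- The constant extension of `c` beyond `[0, T]` is continuous on the whole line.
  set g : ℝ → ℝ := IccExtend hT.le ((Icc 0 T).domRestrict c) with hg
  have hgc : Continuous g := hc.domRestrict.Icc_extend'
  have hgeq : ∀ s ∈ Icc 0 T, g s = c s := fun s hs => by
    rw [hg, IccExtend_of_mem _ _ hs]; rfl
  have h := (intervalIntegral.integral_hasDerivAt_right (hgc.intervalIntegrable 0 t)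
    hgc.aestronglyMeasurable.stronglyMeasurableAtFilter hgc.continuousAt).hasDerivWithinAt
    (s := Icc 0 T)
  rw [hgeq t ht] at h
  have key : ∀ r ∈ Icc 0 T, ∫ s in (0:ℝ)..r, c s = ∫ s in (0:ℝ)..r, g s := fun r hr =>
    intervalIntegral.integral_congr fun s hs => by
      rw [uIcc_of_le hr.1] at hs
      exact (hgeq s ⟨hs.1, hs.2.trans hr.2⟩).symm
  exact h.congr key (key t ht)

lemma linear_ode_eq {T : ℝ} (hT : 0 < T) {c d : ℝ → ℝ} (hc : ContinuousOn c (Icc 0 T))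
    (hd : ∀ t ∈ Icc 0 T, HasDerivWithinAt d (c t * d t) (Icc 0 T) t)
    {t : ℝ} (ht : t ∈ Icc 0 T) : d t = d 0 * Real.exp (∫ s in (0:ℝ)..t, c s) := by
  have h0 : ∀ t ∈ Icc 0 T, HasDerivWithinAt
      (fun t => d t * Real.exp (-∫ s in (0:ℝ)..t, c s)) 0 (Icc 0 T) t := fun t ht => by
    refine ((hd t ht).mul (hasDerivWithinAt_primitive hT hc ht).neg.exp).congr_deriv ?_
    ring
  have h1 := Convex.norm_image_sub_le_of_norm_hasDerivWithin_le (C := 0) h0 (by simp)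
    (convex_Icc 0 T) (left_mem_Icc.2 hT.le) ht
  have h2 : d t * Real.exp (-∫ s in (0:ℝ)..t, c s) = d 0 := by
    simpa [sub_eq_zero] using h1
  rw [← h2, mul_assoc, ← Real.exp_add]
  simp

lemma AbelSol.continuousOn {A B : ℝ → ℝ} {T : ℝ} {u : ℝ → ℝ} (hu : AbelSol A B T u) :
    ContinuousOn u (Icc 0 T) := fun t ht => (hu t ht).continuousWithinAt

lemma AbelSol.eq_mul_exp {A B : ℝ → ℝ} {T : ℝ} (hT : 0 < T)
    (hA : ContinuousOn A (Icc 0 T)) (hB : ContinuousOn B (Icc 0 T)) {u : ℝ → ℝ}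
    (hu : AbelSol A B T u) {t : ℝ} (ht : t ∈ Icc 0 T) :
    u t = u 0 * Real.exp (∫ s in (0:ℝ)..t, (A s * u s ^ 2 + B s * u s)) :=
  linear_ode_eq hT ((hA.mul (hu.continuousOn.pow 2)).add (hB.mul hu.continuousOn))
    (fun t ht => (hu t ht).congr_deriv (by simp; ring)) ht

/-- The reciprocals of two solutions differ by a solution of `w' = A u v w`; written without
reciprocals, this gives the difference of the solutions in closed form. -/
lemma AbelSol.sub_eq {A B : ℝ → ℝ} {T : ℝ} (hT : 0 < T)
    (hA : ContinuousOn A (Icc 0 T)) (hB : ContinuousOn B (Icc 0 T)) {u v : ℝ → ℝ}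
    (hu : AbelSol A B T u) (hv : AbelSol A B T v) (hu0 : u 0 ≠ 0) (hv0 : v 0 ≠ 0)
    {t : ℝ} (ht : t ∈ Icc 0 T) :
    v t - u t = u t * v t * ((v 0 - u 0) / (u 0 * v 0)) *
      Real.exp (∫ s in (0:ℝ)..t, A s * (u s * v s)) := by
  have hune : ∀ t ∈ Icc 0 T, u t ≠ 0 := fun t ht => by
    rw [hu.eq_mul_exp hT hA hB ht]; exact mul_ne_zero hu0 (Real.exp_pos _).ne'
  have hvne : ∀ t ∈ Icc 0 T, v t ≠ 0 := fun t ht => by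
    rw [hv.eq_mul_exp hT hA hB ht]; exact mul_ne_zero hv0 (Real.exp_pos _).ne'
  have h := linear_ode_eq (d := fun t => (u t)⁻¹ - (v t)⁻¹) hT
    (hA.mul (hu.continuousOn.mul hv.continuousOn)) (fun t ht => by
      have h1 := hune t ht
      have h2 := hvne t ht
      refine (((hu t ht).fun_inv h1).sub ((hv t ht).fun_inv h2)).congr_deriv ?_
      simp only [Pi.mul_apply]
      field_simp
      ring) ht
  simp only [Pi.mul_apply] at h
  have h1 := hune t ht
  have h2 := hvne t ht
  have e1 : v t - u t = u t * v t * ((u t)⁻¹ - (v t)⁻¹) := by field_simp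
  have e2 : (v 0 - u 0) / (u 0 * v 0) = (u 0)⁻¹ - (v 0)⁻¹ := by field_simp
  rw [e1, e2, h]; ring

/-! ### Dependence on the initial value -/

lemma abel_family_bound {A B : ℝ → ℝ} {T : ℝ} (hT : 0 < T)
    (hA : ContinuousOn A (Icc 0 T)) (hB : ContinuousOn B (Icc 0 T)) {x : ℝ → ℝ → ℝ}
    {a b : ℝ} (hab : a ≤ b) (h0 : 0 < a ∨ b < 0)
    (hsol : ∀ y ∈ Icc a b, AbelSol A B T (fun t => x t y) ∧ x 0 y = y) :
    ∃ M, 0 ≤ M ∧ ∀ y ∈ Icc a b, ∀ t ∈ Icc 0 T, |x t y| ≤ M := by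
  have hmono : ∀ y ∈ Icc a b, ∀ z ∈ Icc a b, y ≤ z → ∀ t ∈ Icc 0 T, x t y ≤ x t z := by
    intro y hy z hz hyz t ht
    obtain ⟨sy, iy⟩ := hsol y hy
    obtain ⟨sz, iz⟩ := hsol z hz
    have hyz0 : 0 < y * z := by
      rcases h0 with h | h
      · exact mul_pos (h.trans_le hy.1) (h.trans_le hz.1)
      · exact mul_pos_of_neg_of_neg (hy.2.trans_lt h) (hz.2.trans_lt h)
    have hy0 : y ≠ 0 := left_ne_zero_of_mul hyz0.ne'
    have hz0 : z ≠ 0 := right_ne_zero_of_mul hyz0.ne'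
    have e := sy.sub_eq hT hA hB sz (by simpa [iy]) (by simpa [iz]) ht
    have ey := sy.eq_mul_exp hT hA hB ht
    have ez := sz.eq_mul_exp hT hA hB ht
    simp only [iy, iz] at e ey ez
    have hpos : 0 ≤ x t y * x t z := by
      rw [ey, ez, mul_mul_mul_comm]
      positivity
    have : 0 ≤ x t z - x t y := by
      rw [e]
      have := sub_nonneg.2 hyz
      positivity
    linarith
  have hamem := left_mem_Icc.2 hab
  have hbmem := right_mem_Icc.2 hab
  obtain ⟨Ma, hMa⟩ := isCompact_Icc.exists_bound_of_continuousOn (hsol a hamem).1.continuousOn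
  obtain ⟨Mb, hMb⟩ := isCompact_Icc.exists_bound_of_continuousOn (hsol b hbmem).1.continuousOn
  refine ⟨max 0 (max Ma Mb), le_max_left _ _, fun y hy t ht => ?_⟩
  have h1 := hmono a hamem y hy hy.1 t ht
  have h2 := hmono y hy b hbmem hy.2 t ht
  have h3 := abs_le.1 (hMa t ht)
  have h4 := abs_le.1 (hMb t ht)
  have h5 : Ma ≤ max 0 (max Ma Mb) := (le_max_left _ _).trans (le_max_right _ _)
  have h6 : Mb ≤ max 0 (max Ma Mb) := (le_max_right _ _).trans (le_max_right _ _)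
  exact abs_le.2 ⟨by linarith, by linarith⟩

lemma abs_integral_abel_le {A u v : ℝ → ℝ} {T C M : ℝ} (hC : 0 ≤ C) (hM : 0 ≤ M)
    (hA : ∀ t ∈ Icc 0 T, |A t| ≤ C) (hu : ∀ t ∈ Icc 0 T, |u t| ≤ M)
    (hv : ∀ t ∈ Icc 0 T, |v t| ≤ M) {t : ℝ} (ht : t ∈ Icc 0 T) :
    |∫ s in (0:ℝ)..t, A s * (u s * v s)| ≤ C * (M * M) * T := by
  have h := intervalIntegral.norm_integral_le_of_norm_le_const (a := 0) (b := t)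
    (C := C * (M * M)) (f := fun s => A s * (u s * v s)) (fun s hs => by
      rw [uIoc_of_le ht.1] at hs
      have hs' : s ∈ Icc 0 T := ⟨hs.1.le, hs.2.trans ht.2⟩
      rw [Real.norm_eq_abs, abs_mul, abs_mul]
      have := hA s hs'
      have := hu s hs'
      have := hv s hs'
      gcongr)
  refine h.trans ?_
  rw [sub_zero, abs_of_nonneg ht.1]
  have := ht.2
  gcongr

/-- `x(t, ·)` is differentiable, with the derivative obtained as the limit of the difference
quotients given by `AbelSol.sub_eq`. -/
lemma abel_family_hasDerivAt {A B : ℝ → ℝ} {T : ℝ} (hT : 0 < T)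
    (hA : ContinuousOn A (Icc 0 T)) (hB : ContinuousOn B (Icc 0 T)) {x : ℝ → ℝ → ℝ}
    {a b : ℝ} (h0 : 0 < a ∨ b < 0)
    (hsol : ∀ y ∈ Icc a b, AbelSol A B T (fun t => x t y) ∧ x 0 y = y)
    {y : ℝ} (hy : y ∈ Ioo a b) {t : ℝ} (ht : t ∈ Icc 0 T) :
    HasDerivAt (fun z => x t z)
      (x t y ^ 2 / y ^ 2 * Real.exp (∫ s in (0:ℝ)..t, A s * (x s y * x s y))) y := by
  obtain ⟨M, hM0, hM⟩ := abel_family_bound hT hA hB (hy.1.trans hy.2).le h0 hsol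
  obtain ⟨C, hC⟩ := isCompact_Icc.exists_bound_of_continuousOn hA
  have hC0 : 0 ≤ C := (norm_nonneg _).trans (hC t ht)
  have hne : ∀ z ∈ Icc a b, z ≠ 0 := fun z hz => by
    rcases h0 with h | h
    · exact (h.trans_le hz.1).ne'
    · exact (hz.2.trans_lt h).ne
  have hyI : y ∈ Icc a b := Ioo_subset_Icc_self hy
  have hy0 := hne y hyI
  have hev : ∀ᶠ z in 𝓝 y, z ∈ Icc a b := Icc_mem_nhds hy.1 hy.2
  have hsub : ∀ s ∈ Icc 0 T, ∀ z ∈ Icc a b, x s z - x s y = x s y * x s z * ((z - y) / (y * z)) *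
      Real.exp (∫ r in (0:ℝ)..s, A r * (x r y * x r z)) := fun s hs z hz => by
    have e := (hsol y hyI).1.sub_eq hT hA hB (hsol z hz).1 (by simpa [(hsol y hyI).2])
      (by simpa [(hsol z hz).2] using hne z hz) hs
    simpa only [(hsol y hyI).2, (hsol z hz).2] using e
  have hcont : ∀ s ∈ Icc 0 T, Tendsto (fun z => x s z) (𝓝 y) (𝓝 (x s y)) := fun s hs => by
    rw [tendsto_iff_norm_sub_tendsto_zero]
    have hlim : Tendsto (fun z => M * M * |(z - y) / (y * z)| * Real.exp (C * (M * M) * T))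
        (𝓝 y) (𝓝 0) := by
      have : ContinuousAt
          (fun z => M * M * |(z - y) / (y * z)| * Real.exp (C * (M * M) * T)) y := by
        have : y * y ≠ 0 := mul_ne_zero hy0 hy0
        fun_prop (disch := assumption)
      simpa [ContinuousAt] using this
    refine squeeze_zero' (Eventually.of_forall fun _ => norm_nonneg _) ?_ hlim
    filter_upwards [hev] with z hz
    rw [hsub s hs z hz, Real.norm_eq_abs, abs_mul, abs_mul, abs_mul, Real.abs_exp]
    have h1 := hM y hyI s hs
    have h2 := hM z hz s hs
    have h3 := (abs_le.1 (abs_integral_abel_le hC0 hM0 hC (hM y hyI) (hM z hz) hs)).2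
    gcongr
  have hsubset : uIoc 0 t ⊆ Icc 0 T := fun s hs => by
    rw [uIoc_of_le ht.1] at hs
    exact ⟨hs.1.le, hs.2.trans ht.2⟩
  have hJ : Tendsto (fun z => ∫ s in (0:ℝ)..t, A s * (x s y * x s z)) (𝓝 y)
      (𝓝 (∫ s in (0:ℝ)..t, A s * (x s y * x s y))) := by
    refine intervalIntegral.tendsto_integral_filter_of_dominated_convergence
      (fun _ => C * (M * M)) ?_ ?_ intervalIntegrable_const ?_
    · filter_upwards [hev] with z hz
      exact ((hA.mul ((hsol y hyI).1.continuousOn.mul (hsol z hz).1.continuousOn)).mono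
        hsubset).aestronglyMeasurable measurableSet_uIoc
    · filter_upwards [hev] with z hz
      refine Eventually.of_forall fun s hs => ?_
      rw [Real.norm_eq_abs, abs_mul, abs_mul]
      have h1 := hM y hyI s (hsubset hs)
      have h2 := hM z hz s (hsubset hs)
      have h3 : |A s| ≤ C := hC s (hsubset hs)
      gcongr
    · exact Eventually.of_forall fun s hs =>
        ((hcont s (hsubset hs)).const_mul _).const_mul _
  rw [hasDerivAt_iff_tendsto_slope]
  have hmain : Tendsto (fun z => x t y * x t z / (y * z) *
      Real.exp (∫ s in (0:ℝ)..t, A s * (x s y * x s z))) (𝓝[≠] y)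
      (𝓝 (x t y ^ 2 / y ^ 2 * Real.exp (∫ s in (0:ℝ)..t, A s * (x s y * x s y)))) := by
    rw [pow_two, pow_two]
    exact ((((hcont t ht).const_mul _).div (tendsto_id.const_mul y)
      (mul_ne_zero hy0 hy0)).mul ((Real.continuous_exp.tendsto _).comp hJ)).mono_left
      nhdsWithin_le_nhds
  refine hmain.congr' ?_
  filter_upwards [self_mem_nhdsWithin, nhdsWithin_le_nhds hev] with z hzy hz
  have hzy' : z - y ≠ 0 := sub_ne_zero.2 hzy
  have hz0 := hne z hz
  rw [slope_def_field, hsub t ht z hz]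
  field_simp

/-- Differentiation under the integral sign for `F(y) = ∫₀ᵀ A x(·, y)²`. -/
lemma abel_family_integral_hasDerivAt {A B : ℝ → ℝ} {T : ℝ} (hT : 0 < T)
    (hA : ContinuousOn A (Icc 0 T)) (hB : ContinuousOn B (Icc 0 T)) {x : ℝ → ℝ → ℝ}
    {a b : ℝ} (h0 : 0 < a ∨ b < 0)
    (hsol : ∀ y ∈ Icc a b, AbelSol A B T (fun t => x t y) ∧ x 0 y = y)
    {y : ℝ} (hy : y ∈ Ioo a b) :
    HasDerivAt (fun z => ∫ t in (0:ℝ)..T, A t * (x t z * x t z))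
      (∫ t in (0:ℝ)..T, A t * (2 * x t y * (x t y ^ 2 / y ^ 2 *
        Real.exp (∫ s in (0:ℝ)..t, A s * (x s y * x s y))))) y := by
  obtain ⟨M, hM0, hM⟩ := abel_family_bound hT hA hB (hy.1.trans hy.2).le h0 hsol
  obtain ⟨C, hC⟩ := isCompact_Icc.exists_bound_of_continuousOn hA
  have hC0 : 0 ≤ C := (norm_nonneg _).trans (hC 0 (left_mem_Icc.2 hT.le))
  -- A positive lower bound for `z²` on `[a, b]`.
  obtain ⟨m, hm0, hm⟩ : ∃ m : ℝ, 0 < m ∧ ∀ z ∈ Icc a b, m ≤ z ^ 2 := by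
    rcases h0 with h | h
    · exact ⟨a ^ 2, by positivity, fun z hz => by nlinarith [hz.1]⟩
    · exact ⟨b ^ 2, by nlinarith, fun z hz => by nlinarith [hz.2]⟩
  have hsubset : uIoc 0 T ⊆ Icc 0 T := fun s hs => by
    rw [uIoc_of_le hT.le] at hs
    exact ⟨hs.1.le, hs.2⟩
  have huIcc : uIcc 0 T = Icc 0 T := uIcc_of_le hT.le
  have hcx : ∀ z ∈ Icc a b, ContinuousOn (fun t => A t * (x t z * x t z)) (Icc 0 T) :=
    fun z hz => hA.mul ((hsol z hz).1.continuousOn.mul (hsol z hz).1.continuousOn)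
  have hyI : y ∈ Icc a b := Ioo_subset_Icc_self hy
  refine (intervalIntegral.hasDerivAt_integral_of_dominated_loc_of_deriv_le
    (F := fun z t => A t * (x t z * x t z))
    (F' := fun z t => A t * (2 * x t z * (x t z ^ 2 / z ^ 2 *
        Real.exp (∫ s in (0:ℝ)..t, A s * (x s z * x s z)))))
    (bound := fun _ => C * (2 * M * (M ^ 2 / m * Real.exp (C * (M * M) * T))))
    (Ioo_mem_nhds hy.1 hy.2) ?_ ?_ ?_ ?_ intervalIntegrable_const ?_).2
  · filter_upwards [Ioo_mem_nhds hy.1 hy.2] with z hz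
    exact ((hcx z (Ioo_subset_Icc_self hz)).mono hsubset).aestronglyMeasurable measurableSet_uIoc
  · exact (huIcc ▸ hcx y hyI).intervalIntegrable
  · have hxc : ContinuousOn (fun t => x t y) (Icc 0 T) := (hsol y hyI).1.continuousOn
    have hp : ContinuousOn (fun t => ∫ s in (0:ℝ)..t, A s * (x s y * x s y)) (Icc 0 T) :=
      fun t ht => (hasDerivWithinAt_primitive hT (hcx y hyI) ht).continuousWithinAt
    have : ContinuousOn (fun t => A t * (2 * x t y * (x t y ^ 2 / y ^ 2 *
        Real.exp (∫ s in (0:ℝ)..t, A s * (x s y * x s y))))) (Icc 0 T) :=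
      hA.mul ((continuousOn_const.mul hxc).mul (((hxc.pow 2).div_const _).mul hp.rexp))
    exact (this.mono hsubset).aestronglyMeasurable measurableSet_uIoc
  · refine Eventually.of_forall fun t ht z hz => ?_
    have ht' := hsubset ht
    have hzI := Ioo_subset_Icc_self hz
    have h1 := hM z hzI t ht'
    have h2 : |A t| ≤ C := hC t ht'
    have h3 := (abs_le.1 (abs_integral_abel_le hC0 hM0 hC (hM z hzI) (hM z hzI) ht')).2
    have h4 := hm z hzI
    simp only [Real.norm_eq_abs, abs_mul, abs_div, abs_pow, Real.abs_exp, abs_two]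
    rw [sq_abs z]
    gcongr
  · refine Eventually.of_forall fun t ht z hz => ?_
    have h := abel_family_hasDerivAt hT hA hB h0 hsol hz (hsubset ht)
    refine ((h.mul h).const_mul (A t)).congr_deriv ?_
    ring

/-! ### The second derivative of the Poincaré map -/

/-- The integral of `(φ exp h)'` vanishes for a closed solution `φ` with `h(T) = 0`. -/
lemma AbelSol.integral_exp_eq {A B : ℝ → ℝ} {T : ℝ} (hT : 0 < T)
    (hA : ContinuousOn A (Icc 0 T)) (hB : ContinuousOn B (Icc 0 T)) {φ : ℝ → ℝ}
    (hφ : AbelSol A B T φ) (hclosed : φ T = φ 0) (hh : ∫ s in (0:ℝ)..T, A s * φ s ^ 2 = 0) :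
    ∫ t in (0:ℝ)..T, A t * φ t ^ 3 * Real.exp (∫ s in (0:ℝ)..t, A s * φ s ^ 2) =
      -∫ t in (0:ℝ)..T, Real.exp (∫ s in (0:ℝ)..t, A s * φ s ^ 2) *
        (A t * φ t ^ 3 + B t * φ t ^ 2) := by
  have hφc := hφ.continuousOn
  have hprim := fun t ht => hasDerivWithinAt_primitive (t := t) hT (hA.mul (hφc.pow 2)) ht
  simp only [Pi.mul_apply, Pi.pow_apply] at hprim
  have hec : ContinuousOn (fun t => Real.exp (∫ s in (0:ℝ)..t, A s * φ s ^ 2)) (Icc 0 T) :=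
    fun t ht => (hprim t ht).exp.continuousWithinAt
  have huIcc : uIcc 0 T = Icc 0 T := uIcc_of_le hT.le
  have hi1 : IntervalIntegrable
      (fun t => A t * φ t ^ 3 * Real.exp (∫ s in (0:ℝ)..t, A s * φ s ^ 2))
      MeasureTheory.volume 0 T := by
    apply ContinuousOn.intervalIntegrable
    rw [huIcc]
    exact (hA.mul (hφc.pow 3)).mul hec
  have hi2 : IntervalIntegrable (fun t => Real.exp (∫ s in (0:ℝ)..t, A s * φ s ^ 2) *
        (A t * φ t ^ 3 + B t * φ t ^ 2)) MeasureTheory.volume 0 T := by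
    apply ContinuousOn.intervalIntegrable
    rw [huIcc]
    exact hec.mul ((hA.mul (hφc.pow 3)).add (hB.mul (hφc.pow 2)))
  have h := intervalIntegral.integral_eq_sub_of_hasDerivAt_of_le hT.le (hφc.mul hec)
    (fun t ht => by
      have ht' := Ioo_subset_Icc_self ht
      exact (((hφ t ht').mul (hprim t ht').exp).hasDerivAt (Icc_mem_nhds ht.1 ht.2)).congr_deriv
        (show _ = A t * φ t ^ 3 * Real.exp (∫ s in (0:ℝ)..t, A s * φ s ^ 2) +
          Real.exp (∫ s in (0:ℝ)..t, A s * φ s ^ 2) * (A t * φ t ^ 3 + B t * φ t ^ 2) by ring))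
    (hi1.add hi2)
  rw [intervalIntegral.integral_add hi1 hi2] at h
  simp only [Pi.mul_apply, hh, hclosed, intervalIntegral.integral_same, sub_self] at h
  linarith

/-- Formula for the second derivative of the Poincaré map at the initial
value `x₀` of a non-zero closed solution with `P'(x₀) = 1`:
`P''(x₀) = -(2/x₀²) ∫₀ᵀ exp(h(t)) (∂x/∂t)(t,x₀) dt`, where
`h(t) = ∫₀ᵗ A(s) x(s,x₀)² ds` and `∂x/∂t = A x³ + B x²` along the solution. -/
theorem abel_Poincare_second_derivative_formula
    (T : ℝ) (hT : 0 < T) (A B : ℝ → ℝ)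
    (hAc : ContinuousOn A (Set.Icc (0:ℝ) T))
    (hBc : ContinuousOn B (Set.Icc (0:ℝ) T))
    (x : ℝ → ℝ → ℝ) (x₀ : ℝ) (hx₀ : x₀ ≠ 0)
    (U : Set ℝ) (hU : U ∈ nhds x₀)
    (hsol : ∀ y ∈ U, AbelSol A B T (fun t => x t y) ∧ x 0 y = y)
    (hmem : x₀ ∈ U) (hclosed : x T x₀ = x₀)
    (P P' : ℝ → ℝ) (hP : ∀ y, P y = x T y)
    (hP' : ∀ y ∈ U, HasDerivAt P (P' y) y)
    (hP'one : P' x₀ = 1)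
    (p₂ : ℝ) (hp₂ : HasDerivAt P' p₂ x₀) :
    p₂ = -(2 / x₀ ^ 2) *
      ∫ t in (0:ℝ)..T,
        Real.exp (∫ s in (0:ℝ)..t, A s * (x s x₀) ^ 2) *
          (A t * (x t x₀) ^ 3 + B t * (x t x₀) ^ 2) := by
  -- A compact interval around `x₀` inside `U` that avoids `0`.
  obtain ⟨a, b, hab, h0, hIU⟩ : ∃ a b, x₀ ∈ Ioo a b ∧ (0 < a ∨ b < 0) ∧ Icc a b ⊆ U := by
    obtain ⟨ε, hε, hεU⟩ := Metric.nhds_basis_closedBall.mem_iff.1 hU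
    rw [Real.closedBall_eq_Icc] at hεU
    have hpos := abs_pos.2 hx₀
    have hδ : 0 < min ε (|x₀| / 2) := by positivity
    refine ⟨x₀ - min ε (|x₀| / 2), x₀ + min ε (|x₀| / 2), ⟨by linarith, by linarith⟩, ?_, ?_⟩
    · have := min_le_right ε (|x₀| / 2)
      rcases hx₀.lt_or_gt with h | h
      · right; rw [abs_of_neg h] at *; linarith
      · left; rw [abs_of_pos h] at *; linarith
    · refine (Icc_subset_Icc ?_ ?_).trans hεU <;> linarith [min_le_left ε (|x₀| / 2)]
  have hsol' : ∀ y ∈ Icc a b, AbelSol A B T (fun t => x t y) ∧ x 0 y = y :=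
    fun y hy => hsol y (hIU hy)
  have hPx : P = fun y => x T y := funext hP
  have hPform : ∀ y ∈ Ioo a b,
      P' y = P y ^ 2 / y ^ 2 * Real.exp (∫ s in (0:ℝ)..T, A s * (x s y * x s y)) := by
    intro y hy
    have h1 := hP' y (hIU (Ioo_subset_Icc_self hy))
    have h2 := abel_family_hasDerivAt hT hAc hBc h0 hsol' hy (right_mem_Icc.2 hT.le)
    rw [hP y]
    rw [hPx] at h1
    exact h1.unique h2
  have hPx₀ : P x₀ = x₀ := by rw [hP, hclosed]
  have hexp : Real.exp (∫ s in (0:ℝ)..T, A s * (x s x₀ * x s x₀)) = 1 := by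
    have := hPform x₀ hab
    rw [hP'one, hPx₀, div_self (pow_ne_zero 2 hx₀), one_mul] at this
    exact this.symm
  have hF := abel_family_integral_hasDerivAt hT hAc hBc h0 hsol' hab
  have hPd := hP' x₀ hmem
  have hder := ((hPd.pow 2).div ((hasDerivAt_id x₀).pow 2) (pow_ne_zero 2 hx₀)).mul hF.exp
  have hp := hp₂.unique (hder.congr_of_eventuallyEq
    (by filter_upwards [Ioo_mem_nhds hab.1 hab.2] with y hy using hPform y hy))
  simp only [Pi.div_apply, Pi.pow_apply, id, hexp, hPx₀, hP'one] at hp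
  have hibp := AbelSol.integral_exp_eq hT hAc hBc (hsol x₀ hmem).1
    (by simp only [hclosed, (hsol x₀ hmem).2])
    (by simpa [pow_two] using Real.exp_eq_one_iff _ |>.1 hexp)
  have hscale : (∫ t in (0:ℝ)..T, A t * (2 * x t x₀ * (x t x₀ ^ 2 / x₀ ^ 2 *
        Real.exp (∫ s in (0:ℝ)..t, A s * (x s x₀ * x s x₀))))) =
      2 / x₀ ^ 2 * ∫ t in (0:ℝ)..T, A t * x t x₀ ^ 3 *
        Real.exp (∫ s in (0:ℝ)..t, A s * x s x₀ ^ 2) := by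
    rw [← intervalIntegral.integral_const_mul]
    refine intervalIntegral.integral_congr fun t _ => ?_
    simp only [pow_two (x _ x₀)]
    ring
  rw [hscale, hibp] at hp
  rw [hp]
  field_simp
  ring
end
end

section
/- Let E ⊂ ℝ be an interval and let A, B : E → ℝ be smooth, linearly independent functions, neither identically zero, such that {A, B} forms an ET-system with accuracy one on E, i.e., every nontrivial linear combination λA + μB has at most two zeros on E counted with multiplicities. Then at least one of the following holds: (D.1) there exists (λ, μ) ∈ ℝ² ∖ {(0,0)} such that λA(t) + μB(t) ≥ 0 for all t ∈ E or λA(t) + μB(t) ≤ 0 for all t ∈ E; (D.2) A(t)B'(t) − A'(t)B(t) > 0 for all t ∈ E or A(t)B'(t) − A'(t)B(t) < 0 for all t ∈ E. -/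
/-!
If the Wronskian `A B' - A' B` vanishes at some `t₀ ∈ E`, the vectors `(A, A')(t₀)` and
`(B, B')(t₀)` are dependent, so some nontrivial combination `g = l A + m B` has a double zero at
`t₀`. By hypothesis `g` then has no further zero and `g''(t₀) ≠ 0`, so it does not change sign at
`t₀` either, and hence has constant sign on `E` (`constant_sign_of_double_zero`): this is the
first alternative. If the Wronskian never vanishes, it has strict constant sign, being continuous
on an interval.
-/

open Set intervalIntegral

noncomputable section

/-- If the continuous function `g` has no zero on the interval `E` apart from `t₀`, then any
negative value of `g` propagates up to `t₀`, by the intermediate value theorem. -/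
lemma frequently_neg_of_neg {E : Set ℝ} (hE : E.OrdConnected) {g : ℝ → ℝ}
    (hg : ContinuousOn g E) {t₀ a : ℝ} (ht₀ : t₀ ∈ E) (ha : a ∈ E) (hne : a ≠ t₀)
    (hz : ∀ x ∈ E, g x = 0 → x = t₀) (hga : g a < 0) :
    ∃ᶠ x in nhds t₀, g x < 0 := by
  have key : ∀ x ∈ Set.uIcc a t₀, x ≠ t₀ → g x < 0 := by
    intro x hx hxt
    by_contra! hcon
    have hsub : Set.uIcc a x ⊆ Set.uIcc a t₀ := Set.uIcc_subset_uIcc Set.left_mem_uIcc hx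
    have hsubE : Set.uIcc a x ⊆ E := hsub.trans (hE.uIcc_subset ha ht₀)
    obtain ⟨y, hy, hy0⟩ := intermediate_value_uIcc (hg.mono hsubE)
      (Set.mem_uIcc.2 (Or.inl ⟨hga.le, hcon⟩))
    have hyt := hz y (hsubE hy) hy0
    subst hyt
    rcases Set.mem_uIcc.1 hy with h | h <;> rcases Set.mem_uIcc.1 hx with h' | h' <;> grind
  rcases lt_or_gt_of_ne hne with h | h
  · have : ∃ᶠ x in nhdsWithin t₀ (Set.Iio t₀), g x < 0 := by
      refine Filter.Eventually.frequently ?_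
      filter_upwards [Ioo_mem_nhdsLT h] with x hx
      exact key x (Set.mem_uIcc.2 (Or.inl ⟨hx.1.le, hx.2.le⟩)) hx.2.ne
    exact this.filter_mono nhdsWithin_le_nhds
  · have : ∃ᶠ x in nhdsWithin t₀ (Set.Ioi t₀), g x < 0 := by
      refine Filter.Eventually.frequently ?_
      filter_upwards [Ioo_mem_nhdsGT h] with x hx
      exact key x (Set.mem_uIcc.2 (Or.inr ⟨hx.1.le, hx.2.le⟩)) hx.1.ne'
    exact this.filter_mono nhdsWithin_le_nhds

/-- A double zero exhausts the allowance of two zeros: `t₀` is the only zero of `g` and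
`g''(t₀) ≠ 0`. A sign change of `g` would have to occur at an interior `t₀`, where the second
derivative test forces a local extremum. -/
lemma constant_sign_of_double_zero {E : Set ℝ} (hE : E.OrdConnected) {g : ℝ → ℝ}
    (hg : ContinuousOn g E) {t₀ : ℝ} (ht₀ : t₀ ∈ E) (hET : AtMostZerosOn E g 2)
    (h0 : ZeroOrderGe E g t₀ 2) :
    (∀ t ∈ E, 0 ≤ g t) ∨ (∀ t ∈ E, g t ≤ 0) := by
  have hg0 : g t₀ = 0 := by simpa using h0 0 (by norm_num)
  have hg2 : iteratedDerivWithin 2 g E t₀ ≠ 0 := by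
    intro h2
    have := hET {t₀} (fun _ => 3) (by
      intro t ht
      rw [Finset.mem_singleton] at ht
      subst ht
      refine ⟨ht₀, by norm_num, fun k hk => ?_⟩
      rcases Nat.lt_succ_iff_lt_or_eq.1 hk with h | h
      · exact h0 k h
      · rw [h]; exact h2)
    simp at this
  have hz : ∀ x ∈ E, g x = 0 → x = t₀ := by
    intro x hx hgx
    by_contra hne
    have := hET {t₀, x} (fun t => if t = t₀ then 2 else 1) (by
      intro t ht
      rw [Finset.mem_insert, Finset.mem_singleton] at ht
      rcases ht with rfl | rfl
      · exact ⟨ht₀, by simp, by simpa using h0⟩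
      · refine ⟨hx, by simp [hne], ?_⟩
        intro k hk
        simp only [hne, if_false, Nat.lt_one_iff] at hk
        subst hk
        simpa using hgx)
    rw [Finset.sum_pair (Ne.symm hne)] at this
    simp [hne] at this
  by_contra! hcon
  obtain ⟨⟨a, ha, hga⟩, b, hb, hgb⟩ := hcon
  have hat : a ≠ t₀ := by rintro rfl; linarith
  have hbt : b ≠ t₀ := by rintro rfl; linarith
  have hmem : t₀ ∈ Set.uIcc a b := by
    obtain ⟨y, hy, hy0⟩ := intermediate_value_uIcc (hg.mono (hE.uIcc_subset ha hb))
      (Set.mem_uIcc.2 (Or.inl ⟨hga.le, hgb.le⟩))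
    rwa [← hz y (hE.uIcc_subset ha hb hy) hy0]
  have hnhds : E ∈ nhds t₀ := by
    refine Filter.mem_of_superset ?_ (hE.uIcc_subset ha hb)
    rcases Set.mem_uIcc.1 hmem with h | h
    · rw [Set.uIcc_of_le (h.1.trans h.2)]
      exact Icc_mem_nhds (lt_of_le_of_ne h.1 hat) (lt_of_le_of_ne h.2 hbt.symm)
    · rw [Set.uIcc_of_ge (h.1.trans h.2)]
      exact Icc_mem_nhds (lt_of_le_of_ne h.1 hbt) (lt_of_le_of_ne h.2 hat.symm)
  have hset : ∀ k, iteratedDerivWithin k g E t₀ = iteratedDeriv k g t₀ := by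
    intro k
    rw [← iteratedDerivWithin_univ, iteratedDerivWithin, iteratedDerivWithin,
      iteratedFDerivWithin_congr_set (Filter.eventuallyEq_univ.2 hnhds) k]
  have hd1 : deriv g t₀ = 0 := by
    have := h0 1 (by norm_num)
    rwa [hset, iteratedDeriv_one] at this
  have hd2 : deriv (deriv g) t₀ ≠ 0 := by
    rwa [hset, iteratedDeriv_succ, iteratedDeriv_one] at hg2
  have hc : ContinuousAt g t₀ := hg.continuousAt hnhds
  have hfneg := frequently_neg_of_neg hE hg ht₀ ha hat hz hga
  have hfpos := frequently_neg_of_neg (g := fun x => -g x) hE hg.neg ht₀ hb hbt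
    (fun x hx h => hz x hx (neg_eq_zero.1 h)) (by simpa using hgb)
  rcases lt_or_gt_of_ne hd2 with h | h
  · have hmax := isLocalMax_of_deriv_deriv_neg h hd1 hc
    obtain ⟨x, hx, hx'⟩ := (hfpos.and_eventually hmax).exists
    linarith
  · have hmin := isLocalMin_of_deriv_deriv_pos h hd1 hc
    obtain ⟨x, hx, hx'⟩ := (hfneg.and_eventually hmin).exists
    linarith

/-- Quasi-dichotomy for ET-systems with accuracy one: if the smooth,
non-vanishing, linearly independent pair `{A,B}` forms an ET-system with accuracy one
on the interval `E`, then either (D.1) some nontrivial combination `λA + μB` has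
constant sign on `E`, or (D.2) `A B' − A' B` has strict constant sign on `E`. -/
theorem ET_acc_one_quasi_dichotomy
    (E : Set ℝ) (hE : E.OrdConnected) (hEne : E.Nonempty)
    (A B A' B' : ℝ → ℝ)
    (hAsm : ContDiffOn ℝ (⊤ : ℕ∞) A E) (hBsm : ContDiffOn ℝ (⊤ : ℕ∞) B E)
    (hA' : ∀ t ∈ E, HasDerivWithinAt A (A' t) E t)
    (hB' : ∀ t ∈ E, HasDerivWithinAt B (B' t) E t)
    (hAne : ∃ t ∈ E, A t ≠ 0) (hBne : ∃ t ∈ E, B t ≠ 0)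
    (hET : IsETAcc1 E A B) :
    (∃ l m : ℝ, ¬(l = 0 ∧ m = 0) ∧
        ((∀ t ∈ E, 0 ≤ l * A t + m * B t) ∨ (∀ t ∈ E, l * A t + m * B t ≤ 0))) ∨
    ((∀ t ∈ E, 0 < A t * B' t - A' t * B t) ∨ (∀ t ∈ E, A t * B' t - A' t * B t < 0)) := by
  have hnt : E.Nontrivial := by
    by_contra hsub
    rw [Set.not_nontrivial_iff] at hsub
    obtain ⟨s, hs, hAs⟩ := hAne
    have := hET.1 (B s) (-A s) (by
      intro t ht
      rw [hsub ht hs]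
      ring)
    exact hAs (neg_eq_zero.1 this.2)
  have hU : UniqueDiffOn ℝ E := by
    obtain ⟨x, hx, y, hy, hxy⟩ := hnt.exists_lt
    refine uniqueDiffOn_convex hE.convex ⟨(x + y) / 2, ?_⟩
    exact interior_mono (hE.out hx hy) (by rw [interior_Icc]; constructor <;> linarith)
  have hWc : ContinuousOn (fun t => A t * B' t - A' t * B t) E := by
    have hA'c : ContinuousOn A' E :=
      (hAsm.continuousOn_derivWithin hU (by simp)).congr
        fun t ht => ((hA' t ht).derivWithin (hU t ht)).symm
    have hB'c : ContinuousOn B' E :=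
      (hBsm.continuousOn_derivWithin hU (by simp)).congr
        fun t ht => ((hB' t ht).derivWithin (hU t ht)).symm
    exact (hAsm.continuousOn.mul hB'c).sub (hA'c.mul hBsm.continuousOn)
  by_cases hW : ∃ t ∈ E, A t * B' t - A' t * B t = 0
  · left
    obtain ⟨t₀, ht₀, hW0⟩ := hW
    obtain ⟨l, m, hlm, h1, h2⟩ : ∃ l m : ℝ, ¬(l = 0 ∧ m = 0) ∧
        l * A t₀ + m * B t₀ = 0 ∧ l * A' t₀ + m * B' t₀ = 0 := by
      by_cases hAB : A t₀ = 0 ∧ B t₀ = 0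
      · by_cases hAB' : A' t₀ = 0 ∧ B' t₀ = 0
        · exact ⟨1, 0, by simp, by simp [hAB.1], by simp [hAB'.1]⟩
        · refine ⟨B' t₀, -A' t₀, fun h => hAB' ⟨neg_eq_zero.1 h.2, h.1⟩, ?_, by ring⟩
          rw [hAB.1, hAB.2]; ring
      · exact ⟨B t₀, -A t₀, fun h => hAB ⟨neg_eq_zero.1 h.2, h.1⟩, by ring, by linarith⟩
    refine ⟨l, m, hlm, ?_⟩
    refine constant_sign_of_double_zero (g := fun t => l * A t + m * B t) hE
      ((hAsm.continuousOn.const_mul l).add (hBsm.continuousOn.const_mul m)) ht₀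
      (hET.2 l m hlm) ?_
    intro k hk
    interval_cases k
    · simpa using h1
    · rw [iteratedDerivWithin_one]
      exact ((((hA' t₀ ht₀).const_mul l).add ((hB' t₀ ht₀).const_mul m)).derivWithin
        (hU t₀ ht₀)).trans h2
  · right
    by_contra! hcon
    obtain ⟨⟨a, ha, hWa⟩, b, hb, hWb⟩ := hcon
    obtain ⟨y, hy, hy0⟩ := hE.isPreconnected.intermediate_value ha hb hWc ⟨hWa, hWb⟩
    exact hW ⟨y, hy, hy0⟩
end
end

section
/- Let A, B : [0,T] → ℝ be C² on [0,T), continuous on [0,T], such that {A, B} forms an ET-system with accuracy one on [0,T) and A(t)B'(t) − A'(t)B(t) has constant sign (everywhere positive or everywhere negative) on [0,T). Let x be a non-zero closed solution of x' = A(t)x³ + B(t)x² on [0,T], and set φ(t) = −B(t)/A(t) on {t : A(t) ≠ 0}. Then x(t) − φ(t) has at most one zero in each connected component of {t ∈ (0,T) : A(t) ≠ 0}; every such zero is simple (the derivative of x − φ is nonzero there); and the total number of such zeros is either one or two. -/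
/-!
Write `g = A x + B` and `W = A B' - A' B`. The equation reads `x' = x² g`, and a solution with
`x 0 ≠ 0` never vanishes, so the zeros of `x - φ` are exactly the zeros of `g`: at a zero of `g`
one has `A ≠ 0`, since otherwise `B`, hence `W`, would vanish too. Rolle's theorem applied to the
closed solution `x` yields at least one zero.

At a zero of `g` we have `x' = 0`, hence `g' = A' x + B' = W / A`. This gives simplicity, and it
shows that `g` crosses zero in the same direction at all its zeros in a component of `{A ≠ 0}`, so
there is at most one of them in each component (`IsoclineData.unique`).

Replacing `(A, B, x)` by `(A, -B, -x)` changes the sign of `W`, so let `W > 0`. Suppose `g` had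
three zeros `t₁ < t₂ < t₃`, with `A t₁ > 0` after possibly changing the sign of `(A, B)`.
Then `A` has exactly two zeros `s₁ ∈ (t₁, t₂)`, `s₂ ∈ (t₂, t₃)`, at which `W = -A' B > 0` forces
`B s₁ > 0` and `B s₂ < 0`; moreover `g 0 < 0` and `g > 0` on `(t₃, T)`. For `u < T` close to `T`,
`x u` is close to `x T = x 0`, and the combination `x u * A + B` is negative at `0`, positive at
`s₁`, negative at `s₂` and equal to `g u > 0` at `u`. These are three zeros in `[0, T)`,
contradicting the ET-system property (`IsoclineData.no_three_of_pos`).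
-/

open Set intervalIntegral

noncomputable section

/-! ### Sign changes of real functions -/

lemma exists_zero_of_pos_of_neg {f : ℝ → ℝ} {a b : ℝ} (hab : a ≤ b)
    (hf : ContinuousOn f (Icc a b)) (ha : 0 < f a) (hb : f b < 0) :
    ∃ c ∈ Ioo a b, f c = 0 := by
  obtain ⟨c, hc, h⟩ := intermediate_value_Icc' hab hf (show (0:ℝ) ∈ Icc (f b) (f a) from
    ⟨hb.le, ha.le⟩)
  refine ⟨c, ⟨lt_of_le_of_ne hc.1 ?_, lt_of_le_of_ne hc.2 ?_⟩, h⟩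
  · rintro rfl; linarith
  · rintro rfl; linarith

lemma exists_zero_of_neg_of_pos {f : ℝ → ℝ} {a b : ℝ} (hab : a ≤ b)
    (hf : ContinuousOn f (Icc a b)) (ha : f a < 0) (hb : 0 < f b) :
    ∃ c ∈ Ioo a b, f c = 0 := by
  obtain ⟨c, hc, h⟩ := exists_zero_of_pos_of_neg (f := fun t => -f t) hab hf.neg
    (by simpa using ha) (by simpa using hb)
  exact ⟨c, hc, by simpa using h⟩

lemma exists_first_zero {f : ℝ → ℝ} {a b : ℝ} (hab : a ≤ b)
    (hf : ContinuousOn f (Icc a b)) (ha : 0 < f a) (hb : f b ≤ 0) :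
    ∃ c ∈ Ioc a b, f c = 0 ∧ ∀ t ∈ Ico a c, 0 < f t := by
  have hcl : IsClosed (Icc a b ∩ f ⁻¹' Iic 0) := hf.preimage_isClosed_of_isClosed isClosed_Icc
    isClosed_Iic
  have hcpt : IsCompact (Icc a b ∩ f ⁻¹' Iic 0) :=
    isCompact_Icc.of_isClosed_subset hcl inter_subset_left
  obtain ⟨c, ⟨hc, hfc⟩, hleast⟩ := hcpt.exists_isLeast ⟨b, ⟨hab, le_rfl⟩, hb⟩
  have hac : a < c := by
    refine lt_of_le_of_ne hc.1 ?_
    rintro rfl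
    exact absurd hfc (not_le.2 ha)
  have hpos : ∀ t ∈ Ico a c, 0 < f t := by
    intro t ht
    by_contra hcon
    exact absurd (hleast ⟨⟨ht.1, ht.2.le.trans hc.2⟩, not_lt.1 hcon⟩) (not_le.2 ht.2)
  refine ⟨c, ⟨hac, hc.2⟩, le_antisymm hfc ?_, hpos⟩
  by_contra hcon
  obtain ⟨e, he, hfe⟩ := exists_zero_of_pos_of_neg hac.le
    (hf.mono (Icc_subset_Icc le_rfl hc.2)) ha (not_le.1 hcon)
  exact (hpos e ⟨he.1.le, he.2⟩).ne' hfe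

lemma eventually_sign_of_deriv_pos {f : ℝ → ℝ} {s : Set ℝ} {t d : ℝ}
    (h : HasDerivWithinAt f d s t) (hd : 0 < d) (ht : f t = 0) :
    ∀ᶠ u in nhdsWithin t (s \ {t}), 0 < f u * (u - t) := by
  rw [hasDerivWithinAt_iff_tendsto_slope] at h
  filter_upwards [h.eventually (lt_mem_nhds hd), self_mem_nhdsWithin] with u hu hus
  rw [slope_def_field, ht, sub_zero] at hu
  have hne : u - t ≠ 0 := sub_ne_zero.2 hus.2
  have h2 : f u * (u - t) = f u / (u - t) * (u - t) ^ 2 := by field_simp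
  rw [h2]
  positivity

lemma exists_pos_right {f : ℝ → ℝ} {s : Set ℝ} {t d c : ℝ}
    (h : HasDerivWithinAt f d s t) (hd : 0 < d) (ht : f t = 0) (hc : t < c)
    (hs : Ioo t c ⊆ s) : ∃ u ∈ Ioo t c, 0 < f u := by
  have h1 := eventually_sign_of_deriv_pos (h.mono hs) hd ht
  rw [sdiff_singleton_eq_self (by simp), nhdsWithin_Ioo_eq_nhdsGT hc] at h1
  obtain ⟨u, hu, hm⟩ := (h1.and (Ioo_mem_nhdsGT hc)).exists
  exact ⟨u, hm, by have := hm.1; nlinarith [pos_of_mul_pos_left hu (by linarith : 0 ≤ u - t)]⟩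

lemma exists_neg_left {f : ℝ → ℝ} {s : Set ℝ} {t d c : ℝ}
    (h : HasDerivWithinAt f d s t) (hd : 0 < d) (ht : f t = 0) (hc : c < t)
    (hs : Ioo c t ⊆ s) : ∃ u ∈ Ioo c t, f u < 0 := by
  have h1 := eventually_sign_of_deriv_pos (h.mono hs) hd ht
  rw [sdiff_singleton_eq_self (by simp), nhdsWithin_Ioo_eq_nhdsLT hc] at h1
  obtain ⟨u, hu, hm⟩ := (h1.and (Ioo_mem_nhdsLT hc)).exists
  refine ⟨u, hm, ?_⟩
  by_contra hcon
  have := mul_nonneg (not_lt.1 hcon) (by linarith [hm.2] : 0 ≤ t - u)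
  linarith

/-- A function cannot cross zero upwards at two consecutive zeros. -/
lemma no_two_upcrossings {f : ℝ → ℝ} {a b : ℝ} (hab : a < b)
    (hf : ContinuousOn f (Icc a b)) (ha : f a = 0) (hb : f b = 0)
    (hd : ∀ t ∈ Icc a b, f t = 0 → ∃ d > 0, HasDerivWithinAt f d (Icc a b) t) : False := by
  obtain ⟨d, hd0, hda⟩ := hd a ⟨le_rfl, hab.le⟩ ha
  obtain ⟨u, hu, hfu⟩ := exists_pos_right hda hd0 ha hab Ioo_subset_Icc_self
  obtain ⟨c, hc, hfc, hpos⟩ := exists_first_zero hu.2.le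
    (hf.mono (Icc_subset_Icc hu.1.le le_rfl)) hfu hb.le
  obtain ⟨e, he0, hde⟩ := hd c ⟨(hu.1.trans hc.1).le, hc.2⟩ hfc
  obtain ⟨v, hv, hfv⟩ := exists_neg_left hde he0 hfc hc.1
    (fun z hz => ⟨(hu.1.trans hz.1).le, hz.2.le.trans hc.2⟩)
  exact absurd (hpos v ⟨hv.1.le, hv.2⟩) (not_lt.2 hfv.le)

/-! ### Zeros of `A x + B` -/

/-- The part of the hypotheses used to bound the zeros of `g = A x + B`, normalized to
`A B' - A' B > 0`. The equation enters only through `gderiv`, the value of `g'` at the zeros of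
`g`, so that the data are stable under `(A, B) ↦ (-A, -B)`. -/
structure IsoclineData (T : ℝ) (A B A' B' x : ℝ → ℝ) : Prop where
  Ac : ContinuousOn A (Icc 0 T)
  Bc : ContinuousOn B (Icc 0 T)
  xc : ContinuousOn x (Icc 0 T)
  xcl : x 0 = x T
  Ad : ∀ t ∈ Ico 0 T, HasDerivWithinAt A (A' t) (Ico 0 T) t
  W : ∀ t ∈ Ico 0 T, 0 < A t * B' t - A' t * B t
  gderiv : ∀ t ∈ Ico 0 T, A t * x t + B t = 0 →
    HasDerivWithinAt (fun s => A s * x s + B s) (A' t * x t + B' t) (Ico 0 T) t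
  three : ∀ l m : ℝ, ¬(l = 0 ∧ m = 0) → ∀ a ∈ Ico 0 T, ∀ b ∈ Ico 0 T, ∀ c ∈ Ico 0 T,
    a < b → b < c → l * A a + m * B a = 0 → l * A b + m * B b = 0 → l * A c + m * B c = 0 → False

namespace IsoclineData

variable {T : ℝ} {A B A' B' x : ℝ → ℝ}

lemma neg (h : IsoclineData T A B A' B' x) :
    IsoclineData T (fun t => -A t) (fun t => -B t) (fun t => -A' t) (fun t => -B' t) x where
  Ac := h.Ac.neg
  Bc := h.Bc.neg
  xc := h.xc
  xcl := h.xcl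
  Ad t ht := (h.Ad t ht).neg
  W t ht := by linarith [h.W t ht]
  gderiv t ht hg := by
    exact ((h.gderiv t ht (by linarith)).neg.congr_deriv (by ring)).congr_of_mem
      (fun s _ => by simp only [Pi.neg_apply]; ring) ht
  three l m hlm a ha b hb c hc hab hbc h1 h2 h3 :=
    h.three l m hlm a ha b hb c hc hab hbc (by linarith) (by linarith) (by linarith)

lemma gc (h : IsoclineData T A B A' B' x) :
    ContinuousOn (fun s => A s * x s + B s) (Icc 0 T) := (h.Ac.mul h.xc).add h.Bc

lemma A_ne (h : IsoclineData T A B A' B' x) {t : ℝ} (ht : t ∈ Ico 0 T)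
    (hg : A t * x t + B t = 0) : A t ≠ 0 := by
  intro hA
  have hB : B t = 0 := by simpa [hA] using hg
  have := h.W t ht
  simp [hA, hB] at this

lemma slope_pos (h : IsoclineData T A B A' B' x) {t : ℝ} (ht : t ∈ Ico 0 T)
    (hg : A t * x t + B t = 0) (hA : 0 < A t) : 0 < A' t * x t + B' t := by
  have hB : B t = -(A t * x t) := by linarith
  have := h.W t ht
  rw [hB] at this
  have h2 : 0 < A t * (A' t * x t + B' t) := by linarith
  exact pos_of_mul_pos_right h2 hA.le

lemma unique_of_pos (h : IsoclineData T A B A' B' x) {a b : ℝ} (ha : 0 ≤ a) (hab : a < b)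
    (hb : b < T) (hA : ∀ s ∈ Icc a b, A s ≠ 0) (hpos : 0 < A a)
    (hga : A a * x a + B a = 0) (hgb : A b * x b + B b = 0) : False := by
  have hsub : Icc a b ⊆ Ico 0 T := fun s hs => ⟨ha.trans hs.1, hs.2.trans_lt hb⟩
  have hA' : ∀ s ∈ Icc a b, 0 < A s := by
    intro s hs
    by_contra hcon
    obtain ⟨c, hc, hc0, -⟩ := exists_first_zero hs.1 (h.Ac.mono ((Icc_subset_Icc le_rfl hs.2).trans
      (hsub.trans Ico_subset_Icc_self))) hpos (not_lt.1 hcon)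
    exact hA c ⟨hc.1.le, hc.2.trans hs.2⟩ hc0
  exact no_two_upcrossings hab (h.gc.mono (hsub.trans Ico_subset_Icc_self)) hga hgb
    fun t ht hg => ⟨_, h.slope_pos (hsub ht) hg (hA' t ht), (h.gderiv t (hsub ht) hg).mono hsub⟩

/-- At most one zero of `A x + B` on an interval free of zeros of `A`. -/
lemma unique (h : IsoclineData T A B A' B' x) {a b : ℝ} (ha : 0 ≤ a) (hab : a < b)
    (hb : b < T) (hA : ∀ s ∈ Icc a b, A s ≠ 0)
    (hga : A a * x a + B a = 0) (hgb : A b * x b + B b = 0) : False := by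
  rcases lt_or_gt_of_ne (hA a ⟨le_rfl, hab.le⟩) with hneg | hpos
  · exact h.neg.unique_of_pos ha hab hb (fun s hs => neg_ne_zero.2 (hA s hs))
      (neg_pos.2 hneg) (by linarith) (by linarith)
  · exact h.unique_of_pos ha hab hb hA hpos hga hgb

lemma B_pos_of_downcrossing (h : IsoclineData T A B A' B' x) {p s : ℝ} (hp : 0 ≤ p) (hps : p < s)
    (hs : s < T) (hA : ∀ t ∈ Ioo p s, 0 < A t) (h0 : A s = 0) : A' s < 0 ∧ 0 < B s := by
  have hsT : s ∈ Ico 0 T := ⟨hp.trans hps.le, hs⟩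
  have hW := h.W s hsT
  rw [h0, zero_mul, zero_sub] at hW
  have hle : A' s ≤ 0 := by
    by_contra hcon
    obtain ⟨u, hu, hAu⟩ := exists_neg_left (h.Ad s hsT) (not_le.1 hcon) h0 hps
      (fun z hz => ⟨hp.trans hz.1.le, hz.2.trans hs⟩)
    linarith [hA u hu]
  have hlt : A' s < 0 := by
    refine lt_of_le_of_ne hle fun h1 => ?_
    rw [h1] at hW; simp at hW
  refine ⟨hlt, ?_⟩
  by_contra hcon
  nlinarith [mul_nonneg_of_nonpos_of_nonpos hle (not_lt.1 hcon)]

lemma no_three_of_pos (h : IsoclineData T A B A' B' x) {t₁ t₂ t₃ : ℝ} (h1 : 0 < t₁)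
    (h12 : t₁ < t₂) (h23 : t₂ < t₃) (h3 : t₃ < T) (hpos : 0 < A t₁)
    (hg1 : A t₁ * x t₁ + B t₁ = 0) (hg2 : A t₂ * x t₂ + B t₂ = 0)
    (hg3 : A t₃ * x t₃ + B t₃ = 0) : False := by
  have hT : 0 < T := by linarith
  -- `A` vanishes between consecutive zeros of `g`, and nowhere else.
  obtain ⟨s₁, hs₁, hA1⟩ : ∃ s ∈ Icc t₁ t₂, A s = 0 := by
    by_contra! hcon
    exact h.unique h1.le h12 (by linarith) hcon hg1 hg2
  obtain ⟨s₂, hs₂, hA2⟩ : ∃ s ∈ Icc t₂ t₃, A s = 0 := by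
    by_contra! hcon
    exact h.unique (by linarith) h23 h3 hcon hg2 hg3
  have hn1 := h.A_ne (t := t₁) ⟨by linarith, by linarith⟩ hg1
  have hn2 := h.A_ne (t := t₂) ⟨by linarith, by linarith⟩ hg2
  have hn3 := h.A_ne (t := t₃) ⟨by linarith, by linarith⟩ hg3
  have h1s : t₁ < s₁ := lt_of_le_of_ne hs₁.1 (by rintro rfl; exact hn1 hA1)
  have hs2 : s₁ < t₂ := lt_of_le_of_ne hs₁.2 (by rintro rfl; exact hn2 hA1)
  have h2s : t₂ < s₂ := lt_of_le_of_ne hs₂.1 (by rintro rfl; exact hn2 hA2)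
  have hs3 : s₂ < t₃ := lt_of_le_of_ne hs₂.2 (by rintro rfl; exact hn3 hA2)
  have hz : ∀ t ∈ Ico 0 T, A t = 0 → t = s₁ ∨ t = s₂ := by
    intro t ht hAt
    by_contra! hcon
    have key := h.three 1 0 (by simp)
    have m1 : s₁ ∈ Ico 0 T := ⟨by linarith, by linarith⟩
    have m2 : s₂ ∈ Ico 0 T := ⟨by linarith, by linarith⟩
    have e1 : 1 * A s₁ + 0 * B s₁ = 0 := by simp [hA1]
    have e2 : 1 * A s₂ + 0 * B s₂ = 0 := by simp [hA2]
    have e3 : 1 * A t + 0 * B t = 0 := by simp [hAt]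
    rcases lt_or_gt_of_ne hcon.1 with q | q
    · exact key t ht s₁ m1 s₂ m2 q (by linarith) e3 e1 e2
    · rcases lt_or_gt_of_ne hcon.2 with r | r
      · exact key s₁ m1 t ht s₂ m2 q r e1 e3 e2
      · exact key s₁ m1 s₂ m2 t ht (by linarith) r e1 e2 e3
  have sub : ∀ {a b : ℝ}, 0 ≤ a → b ≤ T → Icc a b ⊆ Icc 0 T :=
    fun ha hb => Icc_subset_Icc ha hb
  have hA01 : ∀ t ∈ Ico 0 s₁, 0 < A t := by
    intro t ht
    have hne : A t ≠ 0 := fun h0 => by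
      rcases hz t ⟨ht.1, by linarith [ht.2]⟩ h0 with e | e <;> linarith [ht.2]
    by_contra hcon
    have hlt : A t < 0 := lt_of_le_of_ne (not_lt.1 hcon) hne
    rcases le_total t t₁ with hle | hle
    · obtain ⟨c, hc, hc0⟩ := exists_zero_of_neg_of_pos hle
        (h.Ac.mono (sub ht.1 (by linarith))) hlt hpos
      rcases hz c ⟨by linarith [hc.1, ht.1], by linarith [hc.2]⟩ hc0 with e | e <;>
        linarith [hc.2]
    · obtain ⟨c, hc, hc0⟩ := exists_zero_of_pos_of_neg hle
        (h.Ac.mono (sub h1.le (by linarith [ht.2]))) hpos hlt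
      rcases hz c ⟨by linarith [hc.1, ht.1], by linarith [hc.2, ht.2]⟩ hc0 with e | e <;>
        linarith [hc.2, ht.2]
  obtain ⟨hd1, hB1⟩ := h.B_pos_of_downcrossing (p := 0) le_rfl (s := s₁) (by linarith) (by linarith)
    (fun t ht => hA01 t ⟨ht.1.le, ht.2⟩) hA1
  have hA12 : ∀ t ∈ Ioo s₁ s₂, A t < 0 := by
    intro t ht
    obtain ⟨u, hu, hAu⟩ := exists_pos_right
      (h.neg.Ad s₁ ⟨by linarith, by linarith⟩) (neg_pos.2 hd1) (by simp [hA1]) ht.1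
      (fun z hz => ⟨by linarith [hz.1], by linarith [hz.2, ht.2]⟩)
    by_contra hcon
    obtain ⟨c, hc, hc0, -⟩ := exists_first_zero hu.2.le
      (h.neg.Ac.mono (sub (by linarith [hu.1]) (by linarith [ht.2]))) hAu (by linarith)
    rcases hz c ⟨by linarith [hc.1, hu.1], by linarith [hc.2, ht.2]⟩ (by linarith) with e | e <;>
      linarith [hc.1, hc.2, ht.2, hu.1]
  obtain ⟨hd2, hB2⟩ := h.neg.B_pos_of_downcrossing (p := s₁) (by linarith) (s := s₂) (by linarith)
    (by linarith) (fun t ht => neg_pos.2 (hA12 t ht)) (by simp [hA2])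
  have hA2T : ∀ t ∈ Ioo s₂ T, 0 < A t := by
    intro t ht
    obtain ⟨u, hu, hAu⟩ := exists_pos_right
      (h.Ad s₂ ⟨by linarith, by linarith⟩) (by linarith) hA2 ht.1
      (fun z hz => ⟨by linarith [hz.1], by linarith [hz.2, ht.2]⟩)
    by_contra hcon
    obtain ⟨c, hc, hc0, -⟩ := exists_first_zero hu.2.le
      (h.Ac.mono (sub (by linarith [hu.1]) (by linarith [ht.2]))) hAu (by linarith)
    rcases hz c ⟨by linarith [hc.1, hu.1], by linarith [hc.2, ht.2]⟩ (by linarith) with e | e <;>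
      linarith [hc.1, hc.2, ht.2, hu.1]
  -- The sign of `g` before `t₁` and after `t₃`.
  have hg0 : A 0 * x 0 + B 0 < 0 := by
    obtain ⟨u, hu, hgu⟩ := exists_neg_left (h.gderiv t₁ ⟨h1.le, by linarith⟩ hg1)
      (h.slope_pos ⟨h1.le, by linarith⟩ hg1 hpos) hg1 h1
      (fun z hz => ⟨hz.1.le, by linarith [hz.2]⟩)
    by_contra hcon
    have hzero : ∃ c ∈ Ico 0 u, A c * x c + B c = 0 := by
      rcases (not_lt.1 hcon).eq_or_lt with e | e
      · exact ⟨0, ⟨le_rfl, hu.1⟩, e.symm⟩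
      · obtain ⟨c, hc, hc0⟩ := exists_zero_of_pos_of_neg hu.1.le
          (h.gc.mono (sub le_rfl (by linarith [hu.2]))) e hgu
        exact ⟨c, ⟨hc.1.le, hc.2⟩, hc0⟩
    obtain ⟨c, hc, hc0⟩ := hzero
    exact h.unique hc.1 (hc.2.trans hu.2) (by linarith)
      (fun s hs => (hA01 s ⟨hc.1.trans hs.1, by linarith [hs.2]⟩).ne') hc0 hg1
  have hgT : ∀ t ∈ Ioo t₃ T, 0 < A t * x t + B t := by
    intro t ht
    have m3 : t₃ ∈ Ico 0 T := ⟨by linarith, h3⟩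
    obtain ⟨u, hu, hgu⟩ := exists_pos_right (h.gderiv t₃ m3 hg3)
      (h.slope_pos m3 hg3 (hA2T t₃ ⟨hs3, h3⟩)) hg3 ht.1
      (fun z hz => ⟨by linarith [hz.1], by linarith [hz.2, ht.2]⟩)
    by_contra hcon
    obtain ⟨c, hc, hc0, -⟩ := exists_first_zero hu.2.le
      (h.gc.mono (sub (by linarith [hu.1]) ht.2.le)) hgu (not_lt.1 hcon)
    exact h.unique m3.1 (hu.1.trans hc.1) (by linarith [hc.2, ht.2])
      (fun s hs => (hA2T s ⟨by linarith [hs.1], by linarith [hs.2, hc.2, ht.2]⟩).ne') hg3 hc0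
  -- Freeze the coefficient at the value `x u` with `u` so close to `T` that `g 0 < 0` persists.
  obtain ⟨u, hu, hu0⟩ : ∃ u ∈ Ioo t₃ T, A 0 * x u + B 0 < 0 := by
    have hc : ContinuousWithinAt (fun t => A 0 * x t + B 0) (Icc 0 T) T :=
      ((h.xc T ⟨hT.le, le_rfl⟩).const_mul _).add_const _
    have hc' := (hc.mono (Ioo_subset_Icc_self.trans (sub (by linarith : (0:ℝ) ≤ t₃) le_rfl)))
    have hev := hc'.eventually (gt_mem_nhds (show A 0 * x T + B 0 < 0 by rw [← h.xcl]; exact hg0))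
    rw [nhdsWithin_Ioo_eq_nhdsLT h3] at hev
    obtain ⟨u, hu, hm⟩ := (hev.and (Ioo_mem_nhdsLT h3)).exists
    exact ⟨u, hm, hu⟩
  have hgu := hgT u hu
  have hc : ContinuousOn (fun t => x u * A t + 1 * B t) (Icc 0 T) :=
    (h.Ac.const_mul _).add (h.Bc.const_mul _)
  obtain ⟨a, ha, ha0⟩ := exists_zero_of_neg_of_pos (by linarith : (0:ℝ) ≤ s₁)
    (hc.mono (sub le_rfl (by linarith))) (by linarith) (by simpa [hA1] using hB1)
  obtain ⟨b, hb, hb0⟩ := exists_zero_of_pos_of_neg (by linarith : s₁ ≤ s₂)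
    (hc.mono (sub (by linarith) (by linarith))) (by simpa [hA1] using hB1)
    (by simpa [hA2] using hB2)
  obtain ⟨c, hc', hc0⟩ := exists_zero_of_neg_of_pos (by linarith [hu.1] : s₂ ≤ u)
    (hc.mono (sub (by linarith) hu.2.le)) (by simpa [hA2] using hB2) (by linarith)
  exact h.three (x u) 1 (by simp) a ⟨ha.1.le, by linarith [ha.2]⟩ b
    ⟨by linarith [hb.1], by linarith [hb.2]⟩ c ⟨by linarith [hc'.1], by linarith [hc'.2, hu.2]⟩
    (ha.2.trans hb.1) (hb.2.trans hc'.1) ha0 hb0 hc0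

lemma no_three (h : IsoclineData T A B A' B' x) {t₁ t₂ t₃ : ℝ} (h1 : 0 < t₁)
    (h12 : t₁ < t₂) (h23 : t₂ < t₃) (h3 : t₃ < T)
    (hg1 : A t₁ * x t₁ + B t₁ = 0) (hg2 : A t₂ * x t₂ + B t₂ = 0)
    (hg3 : A t₃ * x t₃ + B t₃ = 0) : False := by
  rcases lt_or_gt_of_ne (h.A_ne (t := t₁) ⟨h1.le, by linarith⟩ hg1) with hn | hp
  · exact h.neg.no_three_of_pos h1 h12 h23 h3 (neg_pos.2 hn) (by linarith) (by linarith)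
      (by linarith)
  · exact h.no_three_of_pos h1 h12 h23 h3 hp hg1 hg2 hg3

end IsoclineData

/-! ### Solutions of the Abel equation -/

/-- Along the solution, `x' = k x` with `k = A x² + B x` continuous; multiplying by the
integrating factor `exp (-∫ k)` gives a constant. -/
lemma AbelSol.ne_zero {A B x : ℝ → ℝ} {T : ℝ} (hT : 0 < T)
    (hAc : ContinuousOn A (Icc 0 T)) (hBc : ContinuousOn B (Icc 0 T))
    (hx : AbelSol A B T x) (hx0 : x 0 ≠ 0) : ∀ t ∈ Icc 0 T, x t ≠ 0 := by
  have hxc : ContinuousOn x (Icc 0 T) := fun t ht => (hx t ht).continuousWithinAt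
  have hk : ContinuousOn (fun t => A t * x t ^ 2 + B t * x t) (Icc 0 T) :=
    (hAc.mul (hxc.pow 2)).add (hBc.mul hxc)
  set k : ℝ → ℝ := IccExtend hT.le (domRestrict (Icc 0 T) (fun t => A t * x t ^ 2 + B t * x t))
  have hkc : Continuous k := (continuousOn_iff_continuous_domRestrict.1 hk).Icc_extend'
  have hke : ∀ t ∈ Icc 0 T, k t = A t * x t ^ 2 + B t * x t := fun t ht => by
    simp only [k, IccExtend_of_mem hT.le _ ht, domRestrict_apply]
  set K : ℝ → ℝ := fun t => ∫ s in (0:ℝ)..t, k s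
  have hK : ∀ t, HasDerivAt K (k t) t := fun t => hkc.integral_hasStrictDerivAt 0 t |>.hasDerivAt
  have hy : ∀ t ∈ Icc 0 T,
      HasDerivWithinAt (fun t => x t * Real.exp (-K t)) 0 (Icc 0 T) t := by
    intro t ht
    refine ((hx t ht).mul ((hK t).neg.exp.hasDerivWithinAt)).congr_deriv ?_
    rw [hke t ht]; simp only [Pi.neg_apply]; ring
  intro t ht h0
  have := constant_of_has_deriv_right_zero (f := fun t => x t * Real.exp (-K t))
    (fun t ht => (hy t ht).continuousWithinAt)
    (fun t ht => ((hy t ⟨ht.1, ht.2.le⟩).mono_of_mem_nhdsWithin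
      (Icc_mem_nhdsGE_of_mem ht))) t ht
  simp only [h0, zero_mul] at this
  exact hx0 ((mul_eq_zero.1 this.symm).resolve_right (Real.exp_ne_zero _))

lemma AtMostZerosOn.no_three {E : Set ℝ} {g : ℝ → ℝ} (h : AtMostZerosOn E g 2) {a b c : ℝ}
    (ha : a ∈ E) (hb : b ∈ E) (hc : c ∈ E) (hab : a < b) (hbc : b < c)
    (ga : g a = 0) (gb : g b = 0) (gc : g c = 0) : False := by
  have hcard : ({a, b, c} : Finset ℝ).card = 3 :=
    Finset.card_eq_three.2 ⟨a, b, c, hab.ne, (hab.trans hbc).ne, hbc.ne, rfl⟩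
  have := h {a, b, c} (fun _ => 1) (by
    intro t ht
    simp only [Finset.mem_insert, Finset.mem_singleton] at ht
    refine ⟨?_, le_rfl, fun k hk => ?_⟩
    · rcases ht with rfl | rfl | rfl <;> assumption
    · obtain rfl : k = 0 := by omega
      rw [iteratedDerivWithin_zero]
      rcases ht with rfl | rfl | rfl <;> assumption)
  simp [hcard] at this

lemma gderiv_of_abelSol {A B A' B' x : ℝ → ℝ} {T : ℝ} (hx : AbelSol A B T x)
    (hA' : ∀ t ∈ Ico 0 T, HasDerivWithinAt A (A' t) (Ico 0 T) t)
    (hB' : ∀ t ∈ Ico 0 T, HasDerivWithinAt B (B' t) (Ico 0 T) t)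
    {t : ℝ} (ht : t ∈ Ico 0 T) (hg : A t * x t + B t = 0) :
    HasDerivWithinAt (fun s => A s * x s + B s) (A' t * x t + B' t) (Ico 0 T) t := by
  refine (((hA' t ht).mul ((hx t (Ico_subset_Icc_self ht)).mono Ico_subset_Icc_self)).add
    (hB' t ht)).congr_deriv ?_
  have : A t * x t ^ 3 + B t * x t ^ 2 = x t ^ 2 * (A t * x t + B t) := by ring
  rw [this, hg]; ring

/-- The zeros of `A x + B` obey the two uniqueness bounds, for either sign of `A B' - A' B`. -/
lemma abel_zero_bounds {T : ℝ} {A B A' B' x : ℝ → ℝ}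
    (hAc : ContinuousOn A (Icc 0 T)) (hBc : ContinuousOn B (Icc 0 T))
    (hA' : ∀ t ∈ Ico 0 T, HasDerivWithinAt A (A' t) (Ico 0 T) t)
    (hB' : ∀ t ∈ Ico 0 T, HasDerivWithinAt B (B' t) (Ico 0 T) t)
    (hET : IsETAcc1 (Ico 0 T) A B)
    (hsign : (∀ t ∈ Ico 0 T, 0 < A t * B' t - A' t * B t) ∨
             (∀ t ∈ Ico 0 T, A t * B' t - A' t * B t < 0))
    (hx : ClosedSol A B T x) :
    (∀ a b, 0 ≤ a → a < b → b < T → (∀ s ∈ Icc a b, A s ≠ 0) →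
      A a * x a + B a = 0 → A b * x b + B b = 0 → False) ∧
    (∀ a b c, 0 < a → a < b → b < c → c < T → A a * x a + B a = 0 →
      A b * x b + B b = 0 → A c * x c + B c = 0 → False) := by
  have hxc : ContinuousOn x (Icc 0 T) := fun t ht => (hx.1 t ht).continuousWithinAt
  rcases hsign with hW | hW
  · have h : IsoclineData T A B A' B' x :=
      { Ac := hAc, Bc := hBc, xc := hxc, xcl := hx.2, Ad := hA', W := hW
        gderiv := fun t ht hg => gderiv_of_abelSol hx.1 hA' hB' ht hg
        three := fun l m hlm a ha b hb c hc hab hbc h1 h2 h3 =>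
          (hET.2 l m hlm).no_three ha hb hc hab hbc h1 h2 h3 }
    exact ⟨fun a b ha hab hb => h.unique ha hab hb,
      fun a b c ha hab hbc hc => h.no_three ha hab hbc hc⟩
  · have h : IsoclineData T A (fun t => -B t) A' (fun t => -B' t) (fun t => -x t) :=
      { Ac := hAc, Bc := hBc.neg, xc := hxc.neg, xcl := by simp [hx.2], Ad := hA'
        W := fun t ht => by linarith [hW t ht]
        gderiv := fun t ht hg => by
          exact ((gderiv_of_abelSol hx.1 hA' hB' ht (by linarith)).neg.congr_deriv
            (by ring)).congr_of_mem (fun s _ => by simp only [Pi.neg_apply]; ring) ht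
        three := fun l m hlm a ha b hb c hc hab hbc h1 h2 h3 =>
          (hET.2 l (-m) (by simpa using hlm)).no_three ha hb hc hab hbc
            (by linarith) (by linarith) (by linarith) }
    exact ⟨fun a b ha hab hb hA ga gb => h.unique ha hab hb hA (by linarith) (by linarith),
      fun a b c ha hab hbc hc ga gb gc =>
        h.no_three ha hab hbc hc (by linarith) (by linarith) (by linarith)⟩

/-- Under (D.2), for a non-zero closed solution `x` of the Abel equation,
`x − φ` (with `φ = −B/A`) has at most one zero in each connected component of
`{t ∈ (0,T) : A(t) ≠ 0}`, all such zeros are simple, and their total number is one or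
two. -/
theorem abel_zeros_of_x_minus_isocline
    (T : ℝ) (hT : 0 < T) (A B A' B' : ℝ → ℝ)
    (hAc : ContinuousOn A (Set.Icc (0:ℝ) T))
    (hBc : ContinuousOn B (Set.Icc (0:ℝ) T))
    (hA2 : ContDiffOn ℝ 2 A (Set.Ico (0:ℝ) T))
    (hB2 : ContDiffOn ℝ 2 B (Set.Ico (0:ℝ) T))
    (hA' : ∀ t ∈ Set.Ico (0:ℝ) T, HasDerivWithinAt A (A' t) (Set.Ico (0:ℝ) T) t)
    (hB' : ∀ t ∈ Set.Ico (0:ℝ) T, HasDerivWithinAt B (B' t) (Set.Ico (0:ℝ) T) t)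
    (hET : IsETAcc1 (Set.Ico (0:ℝ) T) A B)
    (hsign : (∀ t ∈ Set.Ico (0:ℝ) T, 0 < A t * B' t - A' t * B t) ∨
             (∀ t ∈ Set.Ico (0:ℝ) T, A t * B' t - A' t * B t < 0))
    (x : ℝ → ℝ) (hx : ClosedSol A B T x) (hx0 : x 0 ≠ 0) :
    (∀ t₁ ∈ Set.Ioo (0:ℝ) T, ∀ t₂ ∈ Set.Ioo (0:ℝ) T, t₁ ≤ t₂ →
        (∀ s ∈ Set.Icc t₁ t₂, A s ≠ 0) →
        x t₁ = -B t₁ / A t₁ → x t₂ = -B t₂ / A t₂ → t₁ = t₂) ∧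
    (∀ t₀ ∈ Set.Ioo (0:ℝ) T, A t₀ ≠ 0 → x t₀ = -B t₀ / A t₀ →
        ∀ d : ℝ, HasDerivWithinAt (fun t => x t - (-B t / A t)) d (Set.Ico (0:ℝ) T) t₀ →
          d ≠ 0) ∧
    (1 ≤ Set.encard {t | t ∈ Set.Ioo (0:ℝ) T ∧ A t ≠ 0 ∧ x t = -B t / A t} ∧
      Set.encard {t | t ∈ Set.Ioo (0:ℝ) T ∧ A t ≠ 0 ∧ x t = -B t / A t} ≤ 2) := by
  obtain ⟨huniq, hthree⟩ := abel_zero_bounds hAc hBc hA' hB' hET hsign hx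
  have hiff : ∀ t, A t ≠ 0 → (x t = -B t / A t ↔ A t * x t + B t = 0) := by
    intro t hA
    rw [eq_div_iff hA]
    constructor <;> intro h <;> linarith
  have hWne : ∀ t ∈ Set.Ico (0:ℝ) T, A t * B' t - A' t * B t ≠ 0 := by
    intro t ht
    rcases hsign with h | h
    · exact (h t ht).ne'
    · exact (h t ht).ne
  refine ⟨?_, ?_, ?_, ?_⟩
  · intro t₁ h1 t₂ h2 hle hA e1 e2
    by_contra hne
    exact huniq t₁ t₂ h1.1.le (lt_of_le_of_ne hle hne) h2.2 hA
      ((hiff t₁ (hA t₁ ⟨le_rfl, hle⟩)).1 e1) ((hiff t₂ (hA t₂ ⟨hle, le_rfl⟩)).1 e2)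
  · intro t₀ ht hA e d hd
    have ht' : t₀ ∈ Set.Ico (0:ℝ) T := ⟨ht.1.le, ht.2⟩
    have hg := (hiff t₀ hA).1 e
    have hderiv := ((hx.1 t₀ (Ico_subset_Icc_self ht')).mono Ico_subset_Icc_self).sub
      ((hB' t₀ ht').neg.div (hA' t₀ ht') hA)
    have hd' := (uniqueDiffOn_Ico 0 T t₀ ht').eq_deriv _ hd hderiv
    have h0 : A t₀ * x t₀ ^ 3 + B t₀ * x t₀ ^ 2 = 0 := by
      linear_combination x t₀ ^ 2 * hg
    have hval : d = (A t₀ * B' t₀ - A' t₀ * B t₀) / A t₀ ^ 2 := by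
      rw [hd', h0]
      simp only [Pi.neg_apply]
      ring
    rw [hval]
    exact div_ne_zero (hWne t₀ ht') (pow_ne_zero 2 hA)
  · rw [Set.one_le_encard_iff_nonempty]
    have hxc : ContinuousOn x (Set.Icc 0 T) := fun t ht => (hx.1 t ht).continuousWithinAt
    obtain ⟨c, hc, hc0⟩ := exists_hasDerivAt_eq_zero hT hxc hx.2
      (fun t ht => (hx.1 t (Ioo_subset_Icc_self ht)).hasDerivAt (Icc_mem_nhds ht.1 ht.2))
    have hxne := AbelSol.ne_zero hT hAc hBc hx.1 hx0 c (Ioo_subset_Icc_self hc)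
    have hg : A c * x c + B c = 0 := by
      have : x c ^ 2 * (A c * x c + B c) = 0 := by linear_combination hc0
      exact (mul_eq_zero.1 this).resolve_left (pow_ne_zero 2 hxne)
    have hA : A c ≠ 0 := by
      intro hA
      have hB : B c = 0 := by simpa [hA] using hg
      exact hWne c ⟨hc.1.le, hc.2⟩ (by simp [hA, hB])
    exact ⟨c, hc, hA, (hiff c hA).2 hg⟩
  · by_contra hcon
    -- Three distinct elements, listed in increasing order.
    obtain ⟨S, hS, hcard⟩ := Set.exists_subset_encard_eq
      (show (3 : ℕ∞) ≤ Set.encard {t | t ∈ Set.Ioo (0:ℝ) T ∧ A t ≠ 0 ∧ x t = -B t / A t} from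
        Order.add_one_le_of_lt (not_le.1 hcon))
    obtain ⟨F, rfl⟩ := (Set.finite_of_encard_eq_coe hcard).exists_finset_coe
    have hF : F.card = 3 := by
      rw [Set.encard_coe_eq_coe_finsetCard] at hcard
      exact_mod_cast hcard
    have hmem := fun i => hS (Finset.orderEmbOfFin_mem F hF i)
    have hmono := (F.orderEmbOfFin hF).strictMono
    refine hthree (F.orderEmbOfFin hF 0) (F.orderEmbOfFin hF 1) (F.orderEmbOfFin hF 2)
      (hmem 0).1.1 (hmono (by decide)) (hmono (by decide)) (hmem 2).1.2 ?_ ?_ ?_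
    · exact (hiff _ (hmem 0).2.1).1 (hmem 0).2.2
    · exact (hiff _ (hmem 1).2.1).1 (hmem 1).2.2
    · exact (hiff _ (hmem 2).2.1).1 (hmem 2).2.2
end
end

section
/- Let A, B : [0,T] → ℝ be C² on [0,T), continuous on [0,T], such that {A, B} forms an ET-system with accuracy one on [0,T) and A(t)B'(t) − A'(t)B(t) has constant sign (everywhere positive or everywhere negative) on [0,T). Let x be a non-zero closed solution of x' = A(t)x³ + B(t)x² on [0,T], and set φ(t) = −B(t)/A(t) on {t : A(t) ≠ 0}. Then every zero t₀ ∈ (0,T) of x(t) − φ(t) with A(t₀) ≠ 0 is a strict local extremum point of x (indeed x'(t₀) = 0 and x''(t₀) ≠ 0), and x has no other stationary points in (0,T). -/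
/-!
A non-zero closed solution never vanishes: on the compact interval `[0,T]` the coefficient
`c = A x² + B x` in `x' = c x` is bounded by some `K`, so `x² exp (2 K t)` is non-decreasing.
Hence `x' = x² (A x + B)` vanishes exactly where `A x + B = 0`, and there `A ≠ 0`, since
`A = B = 0` would make the Wronskian `A B' - A' B` vanish. At such a point
`A x'' = x² (A B' - A' B) ≠ 0`, and the second derivative test gives a strict extremum.
-/

open Set intervalIntegral

noncomputable section

/-- Strict form of the second derivative test: `f` is the derivative of `x` near `t₀`, with
`f t₀ = 0` and `f' (t₀) > 0`. -/
lemma strict_local_min_of_second_deriv_pos {x f : ℝ → ℝ} {t₀ d : ℝ}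
    (hx : ∀ᶠ s in nhds t₀, HasDerivAt x (f s) s) (hf : HasDerivAt f d t₀)
    (hf0 : f t₀ = 0) (hd : 0 < d) :
    ∀ᶠ s in nhdsWithin t₀ {t₀}ᶜ, x t₀ < x s := by
  have hslope : ∀ᶠ s in nhdsWithin t₀ {t₀}ᶜ, 0 < slope f t₀ s :=
    (hasDerivAt_iff_tendsto_slope.1 hf).eventually (lt_mem_nhds hd)
  rw [eventually_nhdsWithin_iff] at hslope
  obtain ⟨ε, hε, hball⟩ := Metric.eventually_nhds_iff.1 (hx.and hslope)
  rw [eventually_nhdsWithin_iff]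
  refine Metric.eventually_nhds_iff.2 ⟨ε, hε, fun s hs hne => ?_⟩
  rw [Real.dist_eq, abs_lt] at hs
  have key : ∀ u, t₀ - ε < u → u < t₀ + ε →
      HasDerivAt x (f u) u ∧ (u ≠ t₀ → 0 < (u - t₀)⁻¹ * f u) := by
    intro u h1 h2
    have h := hball (y := u) (by rw [Real.dist_eq, abs_lt]; constructor <;> linarith)
    refine ⟨h.1, fun hu => ?_⟩
    have h3 := h.2 hu
    simpa [slope, hf0] using h3
  rcases lt_or_gt_of_ne (show s ≠ t₀ from hne) with h | h
  · obtain ⟨u, hu, hmv⟩ := exists_hasDerivAt_eq_slope x f h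
      (fun u hu =>
        (key u (by linarith [hu.1]) (by linarith [hu.2])).1.continuousAt.continuousWithinAt)
      (fun u hu => (key u (by linarith [hu.1]) (by linarith [hu.2])).1)
    have h3 := (key u (by linarith [hu.1]) (by linarith [hu.2])).2 hu.2.ne
    have h4 : (u - t₀)⁻¹ < 0 := inv_lt_zero.2 (by linarith [hu.2])
    have h5 : f u < 0 := by
      by_contra! hcon
      exact absurd h3 (not_lt.2 (mul_nonpos_of_nonpos_of_nonneg h4.le hcon))
    rw [eq_div_iff (by linarith)] at hmv
    nlinarith
  · obtain ⟨u, hu, hmv⟩ := exists_hasDerivAt_eq_slope x f h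
      (fun u hu =>
        (key u (by linarith [hu.1]) (by linarith [hu.2])).1.continuousAt.continuousWithinAt)
      (fun u hu => (key u (by linarith [hu.1]) (by linarith [hu.2])).1)
    have h3 := (key u (by linarith [hu.1]) (by linarith [hu.2])).2 hu.1.ne'
    have h4 : 0 < (u - t₀)⁻¹ := inv_pos.2 (by linarith [hu.1])
    have h5 : 0 < f u := pos_of_mul_pos_right h3 h4.le
    rw [eq_div_iff (by linarith)] at hmv
    nlinarith

lemma abel_sol_ne_zero {T : ℝ} {A B x : ℝ → ℝ}
    (hAc : ContinuousOn A (Set.Icc (0:ℝ) T)) (hBc : ContinuousOn B (Set.Icc (0:ℝ) T))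
    (hx : AbelSol A B T x) (hx0 : x 0 ≠ 0) {t : ℝ} (ht : t ∈ Set.Icc (0:ℝ) T) : x t ≠ 0 := by
  have hxc : ContinuousOn x (Set.Icc (0:ℝ) T) := fun s hs => (hx s hs).continuousWithinAt
  have hc : ContinuousOn (fun s => A s * x s ^ 2 + B s * x s) (Set.Icc (0:ℝ) T) :=
    (hAc.mul (hxc.pow 2)).add (hBc.mul hxc)
  obtain ⟨K, hK⟩ := isCompact_Icc.exists_bound_of_continuousOn hc
  have hmono : MonotoneOn (fun s => x s ^ 2 * Real.exp (2 * K * s)) (Set.Icc (0:ℝ) T) := by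
    refine monotoneOn_of_hasDerivWithinAt_nonneg (convex_Icc 0 T)
      (f' := fun s => 2 * (A s * x s ^ 2 + B s * x s + K) * x s ^ 2 * Real.exp (2 * K * s))
      ((hxc.pow 2).mul (by fun_prop)) (fun s hs => ?_) (fun s hs => ?_)
    · have hs' := interior_subset hs
      have h1 := ((hx s hs').mono interior_subset).pow 2
      have h2 : HasDerivWithinAt (fun s => Real.exp (2 * K * s))
          (Real.exp (2 * K * s) * (2 * K * 1)) (interior (Set.Icc (0:ℝ) T)) s :=
        (((hasDerivAt_id s).const_mul (2 * K)).exp).hasDerivWithinAt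
      refine (h1.mul h2).congr_deriv ?_
      simp only [Pi.pow_apply]
      push_cast
      ring
    · have h := hK s (interior_subset hs)
      rw [Real.norm_eq_abs, abs_le] at h
      have : 0 ≤ A s * x s ^ 2 + B s * x s + K := by linarith [h.1]
      positivity
  intro h0
  have h := hmono (Set.left_mem_Icc.2 (ht.1.trans ht.2)) ht ht.1
  exact hx0 (by simpa [h0] using h)

/-- Under (D.2), every zero `t₀ ∈ (0,T)` of `x − φ` with `A(t₀) ≠ 0` is a
strict local extremum of `x` (`x'(t₀) = 0` and `x''(t₀) ≠ 0`, where
`x' = A x³ + B x²`), and `x` has no other stationary points in `(0,T)`. -/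
theorem abel_extrema_of_closed_solution
    (T : ℝ) (hT : 0 < T) (A B A' B' : ℝ → ℝ)
    (hAc : ContinuousOn A (Set.Icc (0:ℝ) T))
    (hBc : ContinuousOn B (Set.Icc (0:ℝ) T))
    (hA2 : ContDiffOn ℝ 2 A (Set.Ico (0:ℝ) T))
    (hB2 : ContDiffOn ℝ 2 B (Set.Ico (0:ℝ) T))
    (hA' : ∀ t ∈ Set.Ico (0:ℝ) T, HasDerivWithinAt A (A' t) (Set.Ico (0:ℝ) T) t)
    (hB' : ∀ t ∈ Set.Ico (0:ℝ) T, HasDerivWithinAt B (B' t) (Set.Ico (0:ℝ) T) t)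
    (hET : IsETAcc1 (Set.Ico (0:ℝ) T) A B)
    (hsign : (∀ t ∈ Set.Ico (0:ℝ) T, 0 < A t * B' t - A' t * B t) ∨
             (∀ t ∈ Set.Ico (0:ℝ) T, A t * B' t - A' t * B t < 0))
    (x : ℝ → ℝ) (hx : ClosedSol A B T x) (hx0 : x 0 ≠ 0) :
    (∀ t₀ ∈ Set.Ioo (0:ℝ) T, A t₀ ≠ 0 → x t₀ = -B t₀ / A t₀ →
        (A t₀ * x t₀ ^ 3 + B t₀ * x t₀ ^ 2 = 0) ∧
        (∀ d : ℝ, HasDerivWithinAt (fun t => A t * x t ^ 3 + B t * x t ^ 2) d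
            (Set.Ico (0:ℝ) T) t₀ → d ≠ 0) ∧
        ((∀ᶠ s in nhdsWithin t₀ {t₀}ᶜ, x s < x t₀) ∨
         (∀ᶠ s in nhdsWithin t₀ {t₀}ᶜ, x t₀ < x s))) ∧
    (∀ t ∈ Set.Ioo (0:ℝ) T, A t * x t ^ 3 + B t * x t ^ 2 = 0 →
        (A t ≠ 0 ∧ x t = -B t / A t)) := by
  have hne : ∀ t ∈ Set.Ioo (0:ℝ) T, x t ≠ 0 := fun t ht =>
    abel_sol_ne_zero hAc hBc hx.1 hx0 (Set.Ioo_subset_Icc_self ht)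
  have hW : ∀ t ∈ Set.Ico (0:ℝ) T, A t * B' t - A' t * B t ≠ 0 := by
    intro t ht
    rcases hsign with h | h
    · exact (h t ht).ne'
    · exact (h t ht).ne
  refine ⟨fun t₀ ht₀ hA0 hxt => ?_, fun t ht hst => ?_⟩
  · have hmem := Set.Ioo_subset_Ico_self ht₀
    have hnhds : Set.Ico (0:ℝ) T ∈ nhds t₀ := Ico_mem_nhds ht₀.1 ht₀.2
    have hlin : A t₀ * x t₀ + B t₀ = 0 := by
      rw [hxt]
      field_simp
      ring
    have hf0 : A t₀ * x t₀ ^ 3 + B t₀ * x t₀ ^ 2 = 0 := by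
      linear_combination x t₀ ^ 2 * hlin
    have hxd : ∀ s ∈ Set.Ioo (0:ℝ) T, HasDerivAt x (A s * x s ^ 3 + B s * x s ^ 2) s :=
      fun s hs => (hx.1 s (Set.Ioo_subset_Icc_self hs)).hasDerivAt (Icc_mem_nhds hs.1 hs.2)
    have hx0d : HasDerivAt x 0 t₀ := by simpa [hf0] using hxd t₀ ht₀
    have hfd : HasDerivAt (fun t => A t * x t ^ 3 + B t * x t ^ 2)
        (A' t₀ * x t₀ ^ 3 + B' t₀ * x t₀ ^ 2) t₀ := by
      have hAd := (hA' t₀ hmem).hasDerivAt hnhds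
      have hBd := (hB' t₀ hmem).hasDerivAt hnhds
      refine ((hAd.mul (hx0d.pow 3)).add (hBd.mul (hx0d.pow 2))).congr_deriv ?_
      simp
    have hd : A' t₀ * x t₀ ^ 3 + B' t₀ * x t₀ ^ 2 ≠ 0 := by
      intro h
      -- on `A x + B = 0` the second derivative satisfies `A x'' = x² (A B' - A' B)`
      have h2 : x t₀ ^ 2 * (A t₀ * B' t₀ - A' t₀ * B t₀) = 0 := by
        linear_combination A t₀ * h - A' t₀ * x t₀ ^ 2 * hlin
      exact mul_ne_zero (pow_ne_zero 2 (hne t₀ ht₀)) (hW t₀ hmem) h2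
    have hev : ∀ᶠ s in nhds t₀, HasDerivAt x (A s * x s ^ 3 + B s * x s ^ 2) s := by
      filter_upwards [Ioo_mem_nhds ht₀.1 ht₀.2] with s hs using hxd s hs
    refine ⟨hf0, fun d hdd => ?_, ?_⟩
    · rw [(hdd.hasDerivAt hnhds).unique hfd]
      exact hd
    · rcases lt_or_gt_of_ne hd with hneg | hpos
      · left
        have h := strict_local_min_of_second_deriv_pos (x := fun s => -x s)
          (f := fun s => -(A s * x s ^ 3 + B s * x s ^ 2))
          (hev.mono fun s hs => hs.neg) hfd.neg (by simp [hf0]) (neg_pos.2 hneg)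
        exact h.mono fun s hs => neg_lt_neg_iff.1 hs
      · right
        exact strict_local_min_of_second_deriv_pos hev hfd hf0 hpos
  · have hlin : A t * x t + B t = 0 := by
      have h : x t ^ 2 * (A t * x t + B t) = 0 := by linear_combination hst
      exact (mul_eq_zero.1 h).resolve_left (pow_ne_zero 2 (hne t ht))
    have hA0 : A t ≠ 0 := by
      intro hA0
      have hB0 : B t = 0 := by simpa [hA0] using hlin
      exact hW t (Set.Ioo_subset_Ico_self ht) (by simp [hA0, hB0])
    refine ⟨hA0, ?_⟩
    rw [eq_div_iff hA0]
    linear_combination hlin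
end
end

section
/- Let A, B : [0,T] → ℝ be continuous, C² on [0,T), such that {A, B} forms an ET-system with accuracy one on [0,T) and satisfies (D.1) with E = [0,T): there exists (λ, μ) ≠ (0,0) with λA + μB ≥ 0 on [0,T) or λA + μB ≤ 0 on [0,T). Then the Abel equation x' = A(t)x³ + B(t)x² has at most one non-zero limit cycle, counted with multiplicity; moreover, if this non-zero limit cycle exists, it is hyperbolic (P'(x₀) ≠ 1 at its initial value x₀). -/
/-!
Write `C = l A + m B`, normalised so that `C ≥ 0`; by linear independence `C` is positive somewhere.
For a solution `x` put `q = m x - l`.  Then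

* `q' = x² A q + x² C`, so along a non-zero closed solution `q` cannot vanish: an integrating factor
  turns `q` into a monotone function, and periodicity fixes its sign (`abel_q_sign`);
* `x' / (x² q) = (A x + B) / q`, so the right-hand side has integral zero along a non-zero closed
  solution (`abel_integral_quot`);
* for two solutions, `(A x₁ + B) / q₁ - (A x₂ + B) / q₂ = C (x₂ - x₁) / (q₁ q₂)`, and distinct
  solutions do not cross, so the right-hand side has a strict sign.

Hence there is at most one non-zero closed solution.  For hyperbolicity, the difference `w` of two
solutions satisfies a linear equation `w' = g w`, which gives `P'(x₀) = exp ∫ (3 A x² + 2 B x)`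
(`poincare_deriv`).  Since `∫ (A x² + B x) = ∫ x'/x = 0` and `∫ (x² A + x² C / q) = ∫ q'/q = 0`, the
exponent equals `-∫ x² C / q ≠ 0`.

Every non-crossing and continuous dependence fact comes from the explicit solution formula
`linear_ode` for `w' = g w`.
-/

open Set intervalIntegral

noncomputable section

open MeasureTheory Filter Topology

/-! ### Linear equations -/

lemma hasDeriv_primitive {T : ℝ} (hT : 0 < T) {g : ℝ → ℝ} (hg : ContinuousOn g (Icc 0 T)) :
    ∀ t ∈ Icc 0 T, HasDerivWithinAt (fun t => ∫ s in (0:ℝ)..t, g s) (g t) (Icc 0 T) t := by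
  intro t ht
  -- Extending `g` continuously to the line makes the two-sided theorem available at the endpoints.
  have hc : Continuous (IccExtend hT.le ((Icc (0:ℝ) T).domRestrict g)) :=
    (continuousOn_iff_continuous_domRestrict.1 hg).Icc_extend'
  have hE : ∀ s ∈ Icc 0 T, IccExtend hT.le ((Icc (0:ℝ) T).domRestrict g) s = g s := by
    intro s hs
    rw [IccExtend_of_mem _ _ hs]; rfl
  have h1 := (hc.integral_hasStrictDerivAt 0 t).hasDerivAt.hasDerivWithinAt (s := Icc 0 T)
  rw [hE t ht] at h1
  have hI : ∀ u ∈ Icc 0 T, ∫ s in (0:ℝ)..u, g s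
      = ∫ s in (0:ℝ)..u, IccExtend hT.le ((Icc (0:ℝ) T).domRestrict g) s := by
    intro u hu
    refine intervalIntegral.integral_congr fun s hs => ?_
    rw [uIcc_of_le hu.1] at hs
    exact (hE s ⟨hs.1, hs.2.trans hu.2⟩).symm
  exact h1.congr hI (hI t ht)

lemma eq_of_deriv_zero {T : ℝ} {v : ℝ → ℝ}
    (hv : ∀ t ∈ Icc 0 T, HasDerivWithinAt v 0 (Icc 0 T) t) : ∀ t ∈ Icc 0 T, v t = v 0 := by
  intro t ht
  have h := (convex_Icc (0:ℝ) T).norm_image_sub_le_of_norm_hasDerivWithin_le (C := 0)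
    hv (by simp) (left_mem_Icc.2 (ht.1.trans ht.2)) ht
  simpa [sub_eq_zero] using h

lemma linear_ode {T : ℝ} (hT : 0 < T) {g w : ℝ → ℝ} (hg : ContinuousOn g (Icc 0 T))
    (hw : ∀ t ∈ Icc 0 T, HasDerivWithinAt w (g t * w t) (Icc 0 T) t) :
    ∀ t ∈ Icc 0 T, w t = w 0 * Real.exp (∫ s in (0:ℝ)..t, g s) := by
  intro t ht
  have h := eq_of_deriv_zero (T := T) (v := fun t => w t * Real.exp (-∫ s in (0:ℝ)..t, g s))
    (fun t ht => by
      have := (hw t ht).mul ((hasDeriv_primitive hT hg t ht).neg.exp)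
      refine this.congr_deriv ?_
      simp only [Pi.neg_apply]
      ring) t ht
  simp only [intervalIntegral.integral_same, neg_zero, Real.exp_zero, mul_one] at h
  rw [← h, mul_assoc, ← Real.exp_add]
  simp

lemma linear_closed {T : ℝ} (hT : 0 < T) {g w : ℝ → ℝ} (hg : ContinuousOn g (Icc 0 T))
    (hw : ∀ t ∈ Icc 0 T, HasDerivWithinAt w (g t * w t) (Icc 0 T) t) (h0 : w 0 ≠ 0)
    (hc : w 0 = w T) : ∫ s in (0:ℝ)..T, g s = 0 := by
  have h := linear_ode hT hg hw T (right_mem_Icc.2 hT.le)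
  rw [← hc] at h
  have : Real.exp (∫ s in (0:ℝ)..T, g s) = 1 := by
    apply mul_left_cancel₀ h0; rw [mul_one]; exact h.symm
  simpa using this

/-! ### Solutions of the Abel equation -/

section Abel

variable {T : ℝ} {A B x y : ℝ → ℝ}

lemma AbelSol.cont (hx : AbelSol A B T x) : ContinuousOn x (Icc 0 T) :=
  fun t ht => (hx t ht).continuousWithinAt

/-- The difference of two solutions solves a linear equation. -/
lemma abel_diff (hx : AbelSol A B T x) (hy : AbelSol A B T y) : ∀ t ∈ Icc 0 T,
    HasDerivWithinAt (fun t => y t - x t)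
      ((A t * (y t ^ 2 + y t * x t + x t ^ 2) + B t * (y t + x t)) * (y t - x t))
      (Icc 0 T) t := by
  intro t ht
  refine ((hy t ht).sub (hx t ht)).congr_deriv ?_
  ring

lemma abel_diff_cont (hAc : ContinuousOn A (Icc 0 T)) (hBc : ContinuousOn B (Icc 0 T))
    (hx : ContinuousOn x (Icc 0 T)) (hy : ContinuousOn y (Icc 0 T)) :
    ContinuousOn (fun t => A t * (y t ^ 2 + y t * x t + x t ^ 2) + B t * (y t + x t))
      (Icc 0 T) := by
  fun_prop

lemma abel_diff_formula (hT : 0 < T) (hAc : ContinuousOn A (Icc 0 T))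
    (hBc : ContinuousOn B (Icc 0 T)) (hx : AbelSol A B T x) (hy : AbelSol A B T y) :
    ∀ t ∈ Icc 0 T, y t - x t = (y 0 - x 0) * Real.exp (∫ s in (0:ℝ)..t,
      (A s * (y s ^ 2 + y s * x s + x s ^ 2) + B s * (y s + x s))) :=
  linear_ode hT (abel_diff_cont hAc hBc hx.cont hy.cont) (abel_diff hx hy)

lemma abel_lt (hT : 0 < T) (hAc : ContinuousOn A (Icc 0 T))
    (hBc : ContinuousOn B (Icc 0 T)) (hx : AbelSol A B T x) (hy : AbelSol A B T y)
    (h : x 0 < y 0) : ∀ t ∈ Icc 0 T, x t < y t := by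
  intro t ht
  rw [← sub_pos, abel_diff_formula hT hAc hBc hx hy t ht]
  exact mul_pos (sub_pos.2 h) (Real.exp_pos _)

lemma abel_le (hT : 0 < T) (hAc : ContinuousOn A (Icc 0 T))
    (hBc : ContinuousOn B (Icc 0 T)) (hx : AbelSol A B T x) (hy : AbelSol A B T y)
    (h : x 0 ≤ y 0) : ∀ t ∈ Icc 0 T, x t ≤ y t := by
  intro t ht
  rw [← sub_nonneg, abel_diff_formula hT hAc hBc hx hy t ht]
  exact mul_nonneg (sub_nonneg.2 h) (Real.exp_pos _).le

lemma abel_self (hx : AbelSol A B T x) : ∀ t ∈ Icc 0 T,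
    HasDerivWithinAt x ((A t * x t ^ 2 + B t * x t) * x t) (Icc 0 T) t := by
  intro t ht
  convert hx t ht using 1
  ring

lemma abel_ne_zero (hT : 0 < T) (hAc : ContinuousOn A (Icc 0 T))
    (hBc : ContinuousOn B (Icc 0 T)) (hx : AbelSol A B T x) (h : x 0 ≠ 0) :
    ∀ t ∈ Icc 0 T, x t ≠ 0 := by
  intro t ht
  have hc := hx.cont
  rw [linear_ode hT (by fun_prop) (abel_self hx) t ht]
  exact mul_ne_zero h (Real.exp_ne_zero _)

/-! ### The function `q = m x - l` along a non-zero closed solution -/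

lemma abel_q_deriv (l m : ℝ) (hx : AbelSol A B T x) : ∀ t ∈ Icc 0 T,
    HasDerivWithinAt (fun t => m * x t - l)
      (x t ^ 2 * A t * (m * x t - l) + x t ^ 2 * (l * A t + m * B t)) (Icc 0 T) t := by
  intro t ht
  refine (((hx t ht).const_mul m).sub_const l).congr_deriv ?_
  ring

lemma abel_q_sign (hT : 0 < T) (hAc : ContinuousOn A (Icc 0 T))
    (hBc : ContinuousOn B (Icc 0 T)) {l m : ℝ}
    (hC : ∀ t ∈ Icc 0 T, 0 ≤ l * A t + m * B t) (hC' : ∃ t ∈ Icc 0 T, 0 < l * A t + m * B t)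
    (hx : ClosedSol A B T x) (h0 : x 0 ≠ 0) :
    (∀ t ∈ Icc 0 T, 0 < m * x t - l) ∨ (∀ t ∈ Icc 0 T, m * x t - l < 0) := by
  obtain ⟨hx, hcl⟩ := hx
  have hxc := hx.cont
  have hne := abel_ne_zero hT hAc hBc hx h0
  have hg : ContinuousOn (fun t => x t ^ 2 * A t) (Icc 0 T) := by fun_prop
  set G : ℝ → ℝ := fun t => ∫ s in (0:ℝ)..t, x s ^ 2 * A s with hG
  have hGd := hasDeriv_primitive hT hg
  have hGc : ContinuousOn G (Icc 0 T) := fun t ht => (hGd t ht).continuousWithinAt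
  set r : ℝ → ℝ := fun t => x t ^ 2 * (l * A t + m * B t) * Real.exp (-G t) with hr
  have hrc : ContinuousOn r (Icc 0 T) := by fun_prop
  have hr0 : ∀ t ∈ Icc 0 T, 0 ≤ r t := fun t ht =>
    mul_nonneg (mul_nonneg (sq_nonneg _) (hC t ht)) (Real.exp_pos _).le
  set v : ℝ → ℝ := fun t => (m * x t - l) * Real.exp (-G t) with hv
  have hvd : ∀ t ∈ Icc 0 T, HasDerivWithinAt v (r t) (Icc 0 T) t := by
    intro t ht
    refine ((abel_q_deriv l m hx t ht).mul ((hGd t ht).neg.exp)).congr_deriv ?_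
    simp only [hr, hG, Pi.neg_apply]
    ring
  have hv0 : v 0 = m * x 0 - l := by simp [hv, hG]
  -- The transformed function `v` is the integral of the nonnegative `r`.
  have hvI : ∀ t ∈ Icc 0 T, v t = v 0 + ∫ s in (0:ℝ)..t, r s := by
    intro t ht
    have := eq_of_deriv_zero (v := fun t => v t - ∫ s in (0:ℝ)..t, r s) (T := T)
      (fun t ht => by
        exact ((hvd t ht).sub (hasDeriv_primitive hT hrc t ht)).congr_deriv (sub_self _)) t ht
    simp only [intervalIntegral.integral_same, sub_zero] at this
    linarith
  have hge : ∀ t ∈ Icc 0 T, v 0 ≤ v t := by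
    intro t ht
    rw [hvI t ht]
    have := intervalIntegral.integral_nonneg (f := r) (μ := volume) ht.1
      (fun s hs => hr0 s ⟨hs.1, hs.2.trans ht.2⟩)
    linarith
  have hint : ∀ a ∈ Icc 0 T, ∀ b ∈ Icc 0 T, IntervalIntegrable r volume a b := by
    intro a ha b hb
    exact (hrc.mono (Set.uIcc_subset_Icc ha hb)).intervalIntegrable
  have hle : ∀ t ∈ Icc 0 T, v t ≤ v T := by
    intro t ht
    rw [hvI t ht, hvI T (right_mem_Icc.2 hT.le), ← intervalIntegral.integral_add_adjacent_intervals
      (hint 0 (left_mem_Icc.2 hT.le) t ht) (hint t ht T (right_mem_Icc.2 hT.le))]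
    have := intervalIntegral.integral_nonneg (f := r) (μ := volume) ht.2
      (fun s hs => hr0 s ⟨ht.1.trans hs.1, hs.2⟩)
    linarith
  have hlt : v 0 < v T := by
    rw [hvI T (right_mem_Icc.2 hT.le)]
    obtain ⟨t, ht, hpos⟩ := hC'
    have := intervalIntegral.integral_pos hT hrc (fun s hs => hr0 s ⟨hs.1.le, hs.2⟩)
      ⟨t, ht, mul_pos (mul_pos (sq_pos_of_ne_zero (hne t ht)) hpos) (Real.exp_pos _)⟩
    linarith
  have hvT : v T = v 0 * Real.exp (-G T) := by rw [hv0, hcl]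
  rcases lt_trichotomy (v 0) 0 with h | h | h
  · right
    intro t ht
    have h1 : v t < 0 := (hle t ht).trans_lt (by
      rw [hvT]; exact mul_neg_of_neg_of_pos h (Real.exp_pos _))
    exact (neg_iff_pos_of_mul_neg h1).2 (Real.exp_pos _)
  · rw [hvT, h, zero_mul] at hlt
    exact absurd hlt (lt_irrefl _)
  · left
    intro t ht
    have h1 : 0 < v t := h.trans_le (hge t ht)
    exact (pos_iff_pos_of_mul_pos h1).2 (Real.exp_pos _)

lemma abel_integral_quot (hT : 0 < T) (hAc : ContinuousOn A (Icc 0 T))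
    (hBc : ContinuousOn B (Icc 0 T)) {l m : ℝ}
    (hx : ClosedSol A B T x) (h0 : x 0 ≠ 0) (hq : ∀ t ∈ Icc 0 T, m * x t - l ≠ 0) :
    ∫ t in (0:ℝ)..T, (A t * x t + B t) / (m * x t - l) = 0 := by
  obtain ⟨hx, hcl⟩ := hx
  have hxc := hx.cont
  have hne := abel_ne_zero hT hAc hBc hx h0
  have hu : uIcc 0 T = Icc 0 T := uIcc_of_le hT.le
  -- Substitution `u = x t` in the integral of `1 / (u² (m u - l))` from `x 0` to `x T = x 0`.
  have h := intervalIntegral.integral_comp_mul_deriv'' (a := 0) (b := T) (f := x)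
    (f' := fun t => A t * x t ^ 3 + B t * x t ^ 2)
    (g := fun u : ℝ => 1 / (u ^ 2 * (m * u - l)))
    (by rwa [hu])
    (fun t ht => by
      rw [min_eq_left hT.le, max_eq_right hT.le] at ht
      exact (hx t (Ioo_subset_Icc_self ht)).mono_of_mem_nhdsWithin
        (mem_nhdsWithin_of_mem_nhds (Icc_mem_nhds ht.1 ht.2)))
    (by rw [hu]; fun_prop)
    (by
      rw [hu]
      refine ContinuousOn.div (by fun_prop) (by fun_prop) ?_
      rintro _ ⟨t, ht, rfl⟩
      exact mul_ne_zero (pow_ne_zero _ (hne t ht)) (hq t ht))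
  rw [hcl, intervalIntegral.integral_same] at h
  refine Eq.trans ?_ h
  refine intervalIntegral.integral_congr fun t ht => ?_
  rw [hu] at ht
  have h1 := hne t ht
  have h2 := hq t ht
  simp only [Function.comp]
  field_simp

/-! ### Uniqueness of the non-zero closed solution -/

lemma closed_not_lt (hT : 0 < T) (hAc : ContinuousOn A (Icc 0 T))
    (hBc : ContinuousOn B (Icc 0 T)) {l m : ℝ}
    (hC : ∀ t ∈ Icc 0 T, 0 ≤ l * A t + m * B t) (hC' : ∃ t ∈ Icc 0 T, 0 < l * A t + m * B t)
    (hx : ClosedSol A B T x) (h0 : x 0 ≠ 0) (hy : ClosedSol A B T y) (h0' : y 0 ≠ 0) :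
    ¬ x 0 < y 0 := by
  intro hlt
  have hlt := abel_lt hT hAc hBc hx.1 hy.1 hlt
  have hxc := hx.1.cont
  have hyc := hy.1.cont
  have sx := abel_q_sign hT hAc hBc hC hC' hx h0
  have sy := abel_q_sign hT hAc hBc hC hC' hy h0'
  have nx : ∀ t ∈ Icc 0 T, m * x t - l ≠ 0 := by
    rcases sx with h | h
    exacts [fun t ht => (h t ht).ne', fun t ht => (h t ht).ne]
  have ny : ∀ t ∈ Icc 0 T, m * y t - l ≠ 0 := by
    rcases sy with h | h
    exacts [fun t ht => (h t ht).ne', fun t ht => (h t ht).ne]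
  have ix := abel_integral_quot hT hAc hBc hx h0 nx
  have iy := abel_integral_quot hT hAc hBc hy h0' ny
  have hu : uIcc 0 T = Icc 0 T := uIcc_of_le hT.le
  set f : ℝ → ℝ := fun t =>
    (l * A t + m * B t) * (y t - x t) / ((m * x t - l) * (m * y t - l)) with hf
  have hfc : ContinuousOn f (Icc 0 T) :=
    ContinuousOn.div (by fun_prop) (by fun_prop) (fun t ht => mul_ne_zero (nx t ht) (ny t ht))
  have hfi : ∫ t in (0:ℝ)..T, f t = 0 := by
    have e : ∫ t in (0:ℝ)..T, f t = ∫ t in (0:ℝ)..T,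
        ((A t * x t + B t) / (m * x t - l) - (A t * y t + B t) / (m * y t - l)) := by
      refine intervalIntegral.integral_congr fun t ht => ?_
      rw [hu] at ht
      have h1 := nx t ht
      have h2 := ny t ht
      simp only [hf]
      rw [div_sub_div _ _ h1 h2]
      congr 1
      ring
    rw [e, intervalIntegral.integral_sub, ix, iy, sub_zero]
    · refine ContinuousOn.intervalIntegrable ?_
      rw [hu]; exact ContinuousOn.div (by fun_prop) (by fun_prop) nx
    · refine ContinuousOn.intervalIntegrable ?_
      rw [hu]; exact ContinuousOn.div (by fun_prop) (by fun_prop) ny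
  obtain ⟨t₀, ht₀, hpos⟩ := hC'
  have key : (∀ t ∈ Icc 0 T, 0 < (m * x t - l) * (m * y t - l)) ∨
      (∀ t ∈ Icc 0 T, (m * x t - l) * (m * y t - l) < 0) := by
    rcases sx with h | h <;> rcases sy with h' | h'
    · exact Or.inl fun t ht => mul_pos (h t ht) (h' t ht)
    · exact Or.inr fun t ht => mul_neg_of_pos_of_neg (h t ht) (h' t ht)
    · exact Or.inr fun t ht => mul_neg_of_neg_of_pos (h t ht) (h' t ht)
    · exact Or.inl fun t ht => mul_pos_of_neg_of_neg (h t ht) (h' t ht)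
  rcases key with h | h
  · have := intervalIntegral.integral_pos hT hfc
      (fun t ht => div_nonneg (mul_nonneg (hC t ⟨ht.1.le, ht.2⟩)
        (sub_pos.2 (hlt t ⟨ht.1.le, ht.2⟩)).le) (h t ⟨ht.1.le, ht.2⟩).le)
      ⟨t₀, ht₀, div_pos (mul_pos hpos (sub_pos.2 (hlt t₀ ht₀))) (h t₀ ht₀)⟩
    exact this.ne' hfi
  · have := intervalIntegral.integral_pos hT hfc.neg
      (fun t ht => neg_nonneg.2 (div_nonpos_of_nonneg_of_nonpos (mul_nonneg (hC t ⟨ht.1.le, ht.2⟩)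
        (sub_pos.2 (hlt t ⟨ht.1.le, ht.2⟩)).le) (h t ⟨ht.1.le, ht.2⟩).le))
      ⟨t₀, ht₀, neg_pos.2 (div_neg_of_pos_of_neg
        (mul_pos hpos (sub_pos.2 (hlt t₀ ht₀))) (h t₀ ht₀))⟩
    rw [show (∫ t in (0:ℝ)..T, (-f) t) = -∫ t in (0:ℝ)..T, f t from
      intervalIntegral.integral_neg, hfi] at this
    simp at this

/-! ### Derivative of the Poincaré map -/

/-- Continuous dependence: trapping neighbouring solutions between two fixed ones gives a uniform
bound, and the formula for the difference of two solutions turns it into a Lipschitz estimate. -/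
lemma abel_dependence (hT : 0 < T) (hAc : ContinuousOn A (Icc 0 T))
    (hBc : ContinuousOn B (Icc 0 T)) (hx : AbelSol A B T x) {a b : ℝ → ℝ}
    (ha : AbelSol A B T a) (hb : AbelSol A B T b) (hax : a 0 ≤ x 0) (hxb : x 0 ≤ b 0) :
    ∃ K L : ℝ, ∀ z, AbelSol A B T z → a 0 ≤ z 0 → z 0 ≤ b 0 → ∀ t ∈ Icc 0 T,
      |A t * (z t ^ 2 + z t * x t + x t ^ 2) + B t * (z t + x t)| ≤ K ∧
      |z t - x t| ≤ |z 0 - x 0| * L := by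
  obtain ⟨Ma, hMa⟩ := isCompact_Icc.exists_bound_of_continuousOn ha.cont
  obtain ⟨Mb, hMb⟩ := isCompact_Icc.exists_bound_of_continuousOn hb.cont
  obtain ⟨MA, hMA⟩ := isCompact_Icc.exists_bound_of_continuousOn hAc
  obtain ⟨MB, hMB⟩ := isCompact_Icc.exists_bound_of_continuousOn hBc
  simp only [Real.norm_eq_abs] at hMa hMb hMA hMB
  set R := max Ma Mb with hR
  have hz : ∀ z, AbelSol A B T z → a 0 ≤ z 0 → z 0 ≤ b 0 → ∀ t ∈ Icc 0 T, |z t| ≤ R := by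
    intro z hz h1 h2 t ht
    have e1 := abel_le hT hAc hBc ha hz h1 t ht
    have e2 := abel_le hT hAc hBc hz hb h2 t ht
    have e3 := abs_le.1 ((hMa t ht).trans (le_max_left Ma Mb))
    have e4 := abs_le.1 ((hMb t ht).trans (le_max_right Ma Mb))
    exact abs_le.2 ⟨e3.1.trans e1, e2.trans e4.2⟩
  have hK : ∀ z, AbelSol A B T z → a 0 ≤ z 0 → z 0 ≤ b 0 → ∀ t ∈ Icc 0 T,
      |A t * (z t ^ 2 + z t * x t + x t ^ 2) + B t * (z t + x t)|
        ≤ MA * (R ^ 2 + R * R + R ^ 2) + MB * (R + R) := by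
    intro z hz' h1 h2 t ht
    have bz := hz z hz' h1 h2 t ht
    have bx := hz x hx hax hxb t ht
    have bA := hMA t ht
    have bB := hMB t ht
    have hMA0 := (abs_nonneg _).trans bA
    have hMB0 := (abs_nonneg _).trans bB
    have hR0 := (abs_nonneg _).trans bx
    calc _ ≤ |A t| * (|z t| ^ 2 + |z t| * |x t| + |x t| ^ 2) + |B t| * (|z t| + |x t|) := by
          refine (abs_add_le _ _).trans ?_
          rw [abs_mul, abs_mul]
          gcongr
          · refine (abs_add_le _ _).trans ?_
            rw [abs_pow (x t)]
            gcongr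
            refine (abs_add_le _ _).trans ?_
            rw [abs_pow, abs_mul]
          · exact abs_add_le _ _
      _ ≤ _ := by gcongr
  set K := MA * (R ^ 2 + R * R + R ^ 2) + MB * (R + R)
  have hK0 : 0 ≤ K := (abs_nonneg _).trans (hK x hx hax hxb 0 (left_mem_Icc.2 hT.le))
  refine ⟨K, Real.exp (K * T), fun z hz' h1 h2 t ht => ⟨hK z hz' h1 h2 t ht, ?_⟩⟩
  rw [abel_diff_formula hT hAc hBc hx hz' t ht, abs_mul, Real.abs_exp]
  gcongr
  have := intervalIntegral.norm_integral_le_of_norm_le_const (a := 0) (b := t) (C := K)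
    (f := fun s => A s * (z s ^ 2 + z s * x s + x s ^ 2) + B s * (z s + x s))
    (fun s hs => by
      rw [uIoc_of_le ht.1] at hs
      exact hK z hz' h1 h2 s ⟨hs.1.le, hs.2.trans ht.2⟩)
  rw [sub_zero, abs_of_nonneg ht.1] at this
  exact (le_abs_self _).trans (this.trans (by gcongr; exact ht.2))

lemma poincare_deriv (hT : 0 < T) (hAc : ContinuousOn A (Icc 0 T))
    (hBc : ContinuousOn B (Icc 0 T)) (hx : AbelSol A B T x)
    {P : ℝ → ℝ} {U : Set ℝ} {p : ℝ} (hU : U ∈ 𝓝 (x 0)) (hP : IsPoincareOn A B T P U)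
    (hp : HasDerivAt P p (x 0)) :
    p = Real.exp (∫ t in (0:ℝ)..T, (3 * (A t * x t ^ 2) + 2 * (B t * x t))) := by
  obtain ⟨δ, hδ, hδU⟩ := Metric.nhds_basis_closedBall.mem_iff.1 hU
  rw [Real.closedBall_eq_Icc] at hδU
  choose! Z hZ hZ0 hZT using hP
  have hxc := hx.cont
  have ma : x 0 - δ ∈ U := hδU ⟨le_rfl, by linarith⟩
  have mb : x 0 + δ ∈ U := hδU ⟨by linarith, le_rfl⟩
  obtain ⟨K, L, hKL⟩ := abel_dependence hT hAc hBc hx (hZ _ ma) (hZ _ mb)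
    (by rw [hZ0 _ ma]; linarith) (by rw [hZ0 _ mb]; linarith)
  rw [hZ0 _ ma, hZ0 _ mb] at hKL
  have hnear : ∀ᶠ y in 𝓝[≠] (x 0), y ∈ Icc (x 0 - δ) (x 0 + δ) :=
    mem_nhdsWithin_of_mem_nhds (Icc_mem_nhds (by linarith) (by linarith))
  have hKL' : ∀ y ∈ Icc (x 0 - δ) (x 0 + δ), ∀ t ∈ Icc 0 T,
      |A t * (Z y t ^ 2 + Z y t * x t + x t ^ 2) + B t * (Z y t + x t)| ≤ K ∧
      |Z y t - x t| ≤ |y - x 0| * L := by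
    intro y hy t ht
    have := hKL (Z y) (hZ y (hδU hy)) (by rw [hZ0 y (hδU hy)]; exact hy.1)
      (by rw [hZ0 y (hδU hy)]; exact hy.2) t ht
    rwa [hZ0 y (hδU hy)] at this
  have hptw : ∀ t ∈ Icc 0 T, Tendsto (fun y => Z y t) (𝓝[≠] (x 0)) (𝓝 (x t)) := by
    intro t ht
    rw [tendsto_iff_dist_tendsto_zero]
    have h0 : Tendsto (fun y => |y - x 0| * L) (𝓝[≠] (x 0)) (𝓝 0) := by
      have : Continuous fun y => |y - x 0| * L := by fun_prop
      have := (this.tendsto (x 0)).mono_left (nhdsWithin_le_nhds (s := {x 0}ᶜ))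
      simpa using this
    refine squeeze_zero' (Eventually.of_forall fun _ => dist_nonneg) ?_ h0
    filter_upwards [hnear] with y hy
    exact (hKL' y hy t ht).2
  have hlim : Tendsto (fun y => ∫ t in (0:ℝ)..T,
      (A t * (Z y t ^ 2 + Z y t * x t + x t ^ 2) + B t * (Z y t + x t))) (𝓝[≠] (x 0))
      (𝓝 (∫ t in (0:ℝ)..T, (3 * (A t * x t ^ 2) + 2 * (B t * x t)))) := by
    refine intervalIntegral.tendsto_integral_filter_of_dominated_convergence (fun _ => K) ?_ ?_
      (by simp) ?_
    · filter_upwards [hnear] with y hy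
      refine ContinuousOn.aestronglyMeasurable ?_ measurableSet_uIoc
      refine (abel_diff_cont hAc hBc hxc (hZ y (hδU hy)).cont).mono ?_
      rw [uIoc_of_le hT.le]
      exact Ioc_subset_Icc_self
    · filter_upwards [hnear] with y hy
      refine Eventually.of_forall fun t ht => ?_
      rw [uIoc_of_le hT.le] at ht
      exact (hKL' y hy t (Ioc_subset_Icc_self ht)).1
    · refine Eventually.of_forall fun t ht => ?_
      rw [uIoc_of_le hT.le] at ht
      have h := hptw t (Ioc_subset_Icc_self ht)
      have h2 := ((((h.pow 2).add (h.mul_const (x t))).add_const (x t ^ 2)).const_mul (A t)).add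
        ((h.add_const (x t)).const_mul (B t))
      convert h2 using 2
      ring
  have hslope := hasDerivAt_iff_tendsto_slope.1 hp
  have hlim' := (Real.continuous_exp.tendsto _).comp hlim
  refine tendsto_nhds_unique hslope (hlim'.congr' ?_)
  have TT := right_mem_Icc.2 hT.le
  have hx0 : x 0 ∈ U := mem_of_mem_nhds hU
  have hPx : P (x 0) = x T := by
    have := abel_diff_formula hT hAc hBc hx (hZ _ hx0) T TT
    rw [hZ0 _ hx0, sub_self, zero_mul, hZT _ hx0] at this
    linarith
  filter_upwards [hnear, self_mem_nhdsWithin] with y hy hne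
  have hform := abel_diff_formula hT hAc hBc hx (hZ y (hδU hy)) T TT
  rw [hZ0 y (hδU hy), hZT y (hδU hy)] at hform
  have hne' : y - x 0 ≠ 0 := sub_ne_zero.2 hne
  rw [slope_def_field, hPx, hform]
  simp only [Function.comp]
  field_simp

/-- The exponent in the formula for the derivative of the Poincaré map does not vanish. -/
lemma closed_hyperbolic (hT : 0 < T) (hAc : ContinuousOn A (Icc 0 T))
    (hBc : ContinuousOn B (Icc 0 T)) {l m : ℝ}
    (hC : ∀ t ∈ Icc 0 T, 0 ≤ l * A t + m * B t) (hC' : ∃ t ∈ Icc 0 T, 0 < l * A t + m * B t)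
    (hx : ClosedSol A B T x) (h0 : x 0 ≠ 0) :
    ∫ t in (0:ℝ)..T, (3 * (A t * x t ^ 2) + 2 * (B t * x t)) ≠ 0 := by
  have hxc := hx.1.cont
  have hne := abel_ne_zero hT hAc hBc hx.1 h0
  have hu : uIcc 0 T = Icc 0 T := uIcc_of_le hT.le
  have sx := abel_q_sign hT hAc hBc hC hC' hx h0
  have nx : ∀ t ∈ Icc 0 T, m * x t - l ≠ 0 := by
    rcases sx with h | h
    exacts [fun t ht => (h t ht).ne', fun t ht => (h t ht).ne]
  have c1 : ContinuousOn (fun t => A t * x t ^ 2 + B t * x t) (Icc 0 T) := by fun_prop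
  have i1 := linear_closed hT c1 (abel_self hx.1) h0 hx.2
  set f : ℝ → ℝ := fun t => x t ^ 2 * (l * A t + m * B t) / (m * x t - l) with hf
  have hfc : ContinuousOn f (Icc 0 T) := ContinuousOn.div (by fun_prop) (by fun_prop) nx
  have c2 : ContinuousOn (fun t => x t ^ 2 * A t + f t) (Icc 0 T) := by fun_prop
  have i2 := linear_closed (w := fun t => m * x t - l) hT c2 (fun t ht => by
    refine (abel_q_deriv l m hx.1 t ht).congr_deriv ?_
    simp only [hf]
    rw [add_mul, div_mul_cancel₀ _ (nx t ht)]) (nx 0 (left_mem_Icc.2 hT.le)) (by simp only [hx.2])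
  have e : ∫ t in (0:ℝ)..T, (3 * (A t * x t ^ 2) + 2 * (B t * x t)) =
      ∫ t in (0:ℝ)..T, (2 * (A t * x t ^ 2 + B t * x t) + (x t ^ 2 * A t + f t) - f t) := by
    refine intervalIntegral.integral_congr fun t _ => ?_
    ring
  have n1 : IntervalIntegrable (fun t => 2 * (A t * x t ^ 2 + B t * x t)) volume 0 T :=
    ContinuousOn.intervalIntegrable (by rw [hu]; fun_prop)
  have n2 : IntervalIntegrable (fun t => x t ^ 2 * A t + f t) volume 0 T :=
    ContinuousOn.intervalIntegrable (by rwa [hu])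
  have n3 : IntervalIntegrable f volume 0 T :=
    ContinuousOn.intervalIntegrable (by rwa [hu])
  rw [e, intervalIntegral.integral_sub (n1.add n2) n3, intervalIntegral.integral_add n1 n2,
    intervalIntegral.integral_const_mul, i1, i2]
  obtain ⟨t₀, ht₀, hpos⟩ := hC'
  have hsq : ∀ t ∈ Icc 0 T, 0 < x t ^ 2 := fun t ht => sq_pos_of_ne_zero (hne t ht)
  rcases sx with h | h
  · have := intervalIntegral.integral_pos hT hfc
      (fun t ht => div_nonneg (mul_nonneg (sq_nonneg _) (hC t ⟨ht.1.le, ht.2⟩))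
        (h t ⟨ht.1.le, ht.2⟩).le)
      ⟨t₀, ht₀, div_pos (mul_pos (hsq t₀ ht₀) hpos) (h t₀ ht₀)⟩
    linarith
  · have := intervalIntegral.integral_pos hT hfc.neg
      (fun t ht => neg_nonneg.2 (div_nonpos_of_nonneg_of_nonpos
        (mul_nonneg (sq_nonneg _) (hC t ⟨ht.1.le, ht.2⟩)) (h t ⟨ht.1.le, ht.2⟩).le))
      ⟨t₀, ht₀, neg_pos.2 (div_neg_of_pos_of_neg (mul_pos (hsq t₀ ht₀) hpos) (h t₀ ht₀))⟩
    rw [show (∫ t in (0:ℝ)..T, (-f) t) = -∫ t in (0:ℝ)..T, f t from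
      intervalIntegral.integral_neg] at this
    linarith

/-! ### The sign condition -/

/-- The sign condition, normalised to `C ≥ 0` and extended to the closed interval by continuity. -/
lemma normalise_D1 (hT : 0 < T) (hAc : ContinuousOn A (Icc 0 T)) (hBc : ContinuousOn B (Icc 0 T))
    (hind : ∀ l m : ℝ, (∀ t ∈ Ico 0 T, l * A t + m * B t = 0) → l = 0 ∧ m = 0)
    (hD1 : ∃ l m : ℝ, ¬(l = 0 ∧ m = 0) ∧
        ((∀ t ∈ Ico 0 T, 0 ≤ l * A t + m * B t) ∨ (∀ t ∈ Ico 0 T, l * A t + m * B t ≤ 0))) :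
    ∃ l m : ℝ, (∀ t ∈ Icc 0 T, 0 ≤ l * A t + m * B t) ∧
      ∃ t ∈ Icc 0 T, 0 < l * A t + m * B t := by
  have main : ∀ l m : ℝ, ¬(l = 0 ∧ m = 0) → (∀ t ∈ Ico 0 T, 0 ≤ l * A t + m * B t) →
      (∀ t ∈ Icc 0 T, 0 ≤ l * A t + m * B t) ∧ ∃ t ∈ Icc 0 T, 0 < l * A t + m * B t := by
    intro l m hlm h
    constructor
    · have hcl : closure (Ico 0 T) = Icc 0 T := closure_Ico hT.ne
      have hc : ContinuousOn (fun t => l * A t + m * B t) (closure (Ico 0 T)) := by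
        rw [hcl]; fun_prop
      intro t ht
      rw [← hcl] at ht
      exact closure_minimal (s := (fun t => l * A t + m * B t) '' Ico 0 T) (t := Ici 0)
        (by rintro _ ⟨s, hs, rfl⟩; exact h s hs) isClosed_Ici
        (hc.image_closure ⟨t, ht, rfl⟩)
    · by_contra! hcon
      exact hlm (hind l m fun t ht => le_antisymm (hcon t (Ico_subset_Icc_self ht)) (h t ht))
  obtain ⟨l, m, hlm, h | h⟩ := hD1
  · exact ⟨l, m, main l m hlm h⟩
  · refine ⟨-l, -m, main (-l) (-m) (by simpa using hlm) fun t ht => ?_⟩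
    have := h t ht
    linarith

end Abel

/-- Under (D.1), the Abel equation has at most one non-zero limit cycle,
and if it exists it is hyperbolic (`P'(x₀) ≠ 1`). -/
theorem abel_D1_at_most_one_nonzero_limit_cycle
    (T : ℝ) (hT : 0 < T) (A B : ℝ → ℝ)
    (hAc : ContinuousOn A (Set.Icc (0:ℝ) T))
    (hBc : ContinuousOn B (Set.Icc (0:ℝ) T))
    (hA2 : ContDiffOn ℝ 2 A (Set.Ico (0:ℝ) T))
    (hB2 : ContDiffOn ℝ 2 B (Set.Ico (0:ℝ) T))
    (hET : IsETAcc1 (Set.Ico (0:ℝ) T) A B)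
    (hD1 : ∃ l m : ℝ, ¬(l = 0 ∧ m = 0) ∧
        ((∀ t ∈ Set.Ico (0:ℝ) T, 0 ≤ l * A t + m * B t) ∨
         (∀ t ∈ Set.Ico (0:ℝ) T, l * A t + m * B t ≤ 0))) :
    Set.encard {v | v ∈ LCInits A B T ∧ v ≠ 0} ≤ 1 ∧
    (∀ x : ℝ → ℝ, LimitCycle A B T x → x 0 ≠ 0 →
      ∀ (P : ℝ → ℝ) (U : Set ℝ) (p : ℝ), U ∈ nhds (x 0) →
        IsPoincareOn A B T P U → HasDerivAt P p (x 0) → p ≠ 1) := by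
  obtain ⟨l, m, hC, hC'⟩ := normalise_D1 hT hAc hBc hET.1 hD1
  constructor
  · rw [Set.encard_le_one_iff]
    rintro a b ⟨⟨x, hx, rfl⟩, ha⟩ ⟨⟨y, hy, rfl⟩, hb⟩
    exact le_antisymm (not_lt.1 (closed_not_lt hT hAc hBc hC hC' hy.1 hb hx.1 ha))
      (not_lt.1 (closed_not_lt hT hAc hBc hC hC' hx.1 ha hy.1 hb))
  · intro x hx h0 P U p hU hP hp hp1
    have h := poincare_deriv hT hAc hBc hx.1.1 hU hP hp
    rw [hp1, eq_comm, Real.exp_eq_one_iff] at h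
    exact closed_hyperbolic hT hAc hBc hC hC' hx.1 h0 h
end
end
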